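/- For every integer n ≥ 7, the number of Dyck paths D ∈ D̂_n with x_1(D) = y_2(D) equals Σ_{i=0}^{n-7} (i+1)·M_i·M_{n-7-i}; moreover for n = 3 there is exactly one Dyck path D ∈ D̂_3 with x_1(D) = y_2(D). -/

import Mathlib

/-- A Dyck path of semilength `n`, encoded as a word on `Bool`
(`true` = up step `u`, `false` = down step `d`). -/
def IsDyckWord (n : ℕ) (w : List Bool) : Prop :=
  w.length = 2 * n ∧ w.count true = n ∧ w.count false = n ∧
    ∀ p : List Bool, p <+: w → p.count false ≤ p.count true

/-- The (0-based) indices of the up steps of `w`. -/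
def upIdxs (w : List Bool) : List ℕ := w.findIdxs (· == true)

/-- The (0-based) indices of the down steps of `w`. -/
def downIdxs (w : List Bool) : List ℕ := w.findIdxs (· == false)

/-- `rStat w i` is the number of `d`'s strictly between the `i`-th and the
`(i+1)`-st `u` of `w` (with `i` 1-indexed). -/
def rStat (w : List Bool) (i : ℕ) : ℕ :=
  ((w.take ((upIdxs w).getD i 0)).drop ((upIdxs w).getD (i - 1) 0 + 1)).count false

/-- `sStat w i` is the number of `u`'s strictly between the `i`-th and the
`(i+1)`-st `d` of `w` (with `i` 1-indexed). -/
def sStat (w : List Bool) (i : ℕ) : ℕ :=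
  ((w.take ((downIdxs w).getD i 0)).drop ((downIdxs w).getD (i - 1) 0 + 1)).count true

/-- The statistic `L(D) = ∏_{i=1}^{n-1} C(r_i + s_i, r_i)` of a Dyck path of semilength `n`. -/
def LStat (n : ℕ) (w : List Bool) : ℕ :=
  ∏ i ∈ Finset.Icc 1 (n - 1), Nat.choose (rStat w i + sStat w i) (rStat w i)

/-- `dyckL n k` = the set `𝒟ₙᵏ` of Dyck paths of semilength `n` with `L(D) = k`. -/
def dyckL (n k : ℕ) : Set (List Bool) := {w | IsDyckWord n w ∧ LStat n w = k}

/-- A Motzkin path, encoded as a word on `Option Bool`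
(`some true` = up, `some false` = down, `none` = horizontal). -/
def IsMotzkinWord (w : List (Option Bool)) : Prop :=
  w.count (some false) = w.count (some true) ∧
    ∀ p : List (Option Bool), p <+: w → p.count (some false) ≤ p.count (some true)

/-- `motzkin n` = the `n`-th Motzkin number `Mₙ`, the number of Motzkin paths of length `n`. -/
noncomputable def motzkin (n : ℕ) : ℕ :=
  {w : List (Option Bool) | w.length = n ∧ IsMotzkinWord w}.ncard

/-- The Motzkin ballot number `T_{n,k}`: the number of Motzkin paths of length `n`
whose first down step is in position `k` (1-indexed); by convention `T_{k-1,k} = 1`,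
counting the path of `k-1` horizontal steps. -/
noncomputable def motzkinBallot (n k : ℕ) : ℕ :=
  if n + 1 = k then 1
  else
    {w : List (Option Bool) | w.length = n ∧ IsMotzkinWord w ∧
      w.getD (k - 1) none = some false ∧ ∀ j < k - 1, w.getD j none ≠ some false}.ncard

/-- Motzkin numbers with integer index: `Mᵢ = 0` for `i < 0`. -/
noncomputable def motzkinZ (i : ℤ) : ℤ := if 0 ≤ i then (motzkin i.toNat : ℤ) else 0

/-- Motzkin ballot numbers with integer first index: `T_{n,k} = 0` for `n < 0`. -/
noncomputable def motzkinBallotZ (n : ℤ) (k : ℕ) : ℤ :=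
  if 0 ≤ n then (motzkinBallot n.toNat k : ℤ) else 0

/-- The set of returns of a Dyck path `w` of semilength `n`:
indices `1 ≤ k ≤ n` such that the path touches the `x`-axis after `2k` steps. -/
def returns (n : ℕ) (w : List Bool) : Finset ℕ :=
  (Finset.Icc 1 n).filter fun k => (w.take (2 * k)).count false = (w.take (2 * k)).count true

/-- `dyckRS n r s` = the set `𝒟ₙ^{r,s}` of Dyck paths of semilength `n` having exactly one
index `i` with `rᵢ > 0` and `sᵢ > 0`, and such that at that index `rᵢ = r` and `sᵢ = s`. -/
def dyckRS (n r s : ℕ) : Set (List Bool) :=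
  {w | IsDyckWord n w ∧ ∃ i ∈ Finset.Icc 1 (n - 1),
    (0 < rStat w i ∧ 0 < sStat w i) ∧ rStat w i = r ∧ sStat w i = s ∧
      ∀ j ∈ Finset.Icc 1 (n - 1), 0 < rStat w j ∧ 0 < sStat w j → j = i}

/-- `twoStars n w k₁ k₂` says that `k₁ < k₂` are exactly the two indices `i` of `w`
with `rᵢ > 0` and `sᵢ > 0`. -/
def twoStars (n : ℕ) (w : List Bool) (k₁ k₂ : ℕ) : Prop :=
  k₁ ∈ Finset.Icc 1 (n - 1) ∧ k₂ ∈ Finset.Icc 1 (n - 1) ∧ k₁ < k₂ ∧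
    (0 < rStat w k₁ ∧ 0 < sStat w k₁) ∧ (0 < rStat w k₂ ∧ 0 < sStat w k₂) ∧
    ∀ j ∈ Finset.Icc 1 (n - 1), 0 < rStat w j ∧ 0 < sStat w j → j = k₁ ∨ j = k₂

/-- `xStat w k` = the number of indices `i < k` with `rᵢ = 0` and `sᵢ > 0`. -/
def xStat (w : List Bool) (k : ℕ) : ℕ :=
  ((Finset.Ico 1 k).filter fun i => rStat w i = 0 ∧ 0 < sStat w i).card

/-- `yStat w k` = the number of indices `i < k` with `rᵢ > 0` and `sᵢ = 0`. -/
def yStat (w : List Bool) (k : ℕ) : ℕ :=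
  ((Finset.Ico 1 k).filter fun i => 0 < rStat w i ∧ sStat w i = 0).card

/-- The generating function `m(x) = Σ Mₙ xⁿ` of the Motzkin numbers, over `ℚ`. -/
noncomputable def motzkinGF : PowerSeries ℚ := PowerSeries.mk fun n => (motzkin n : ℚ)

/-! Record, for each `i`, whether the `i`-th up step and the `i`-th down step of a Dyck path end
their runs. The resulting word on `Bool × Bool` determines the path, and the indices `k₁ < k₂` are
the positions of its letters `(true, true)` other than the last letter. Reading the remaining
letters as Motzkin steps splits a Motzkin path into three words `P`, `M`, `Q`. Given `x₁ = y₂`, the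
condition `L = 4` says that `M` begins with an up step and ends with a down step, unless it is
empty, which forces `n = 3`, and that `P` and the reversal of `Q` have two consecutive up steps at a
prescribed place. Deleting one of these leaves arbitrary Motzkin prefixes, whose final heights are
the numbers of down and up steps of `M` without its first and last steps.

Let `m` be the generating function of the Motzkin numbers. The Motzkin prefixes ending at height
`a` have generating function `(x m)ᵃ m`, so the triples have generating function
`m² ∑ₖ (x (1 + 2 x m))ᵏ = m² / (1 - x (1 + 2 x m))`. Since `f = x m` satisfies `f = x (1 + f + f²)`,
this is `f' m`, whose coefficients are the sums `∑ᵢ (i + 1) Mᵢ Mₗ₋ᵢ`. -/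

section ListLemmas

variable {α β : Type*}

lemma prefix_append_iff {p l r : List α} :
    p <+: l ++ r ↔ p <+: l ∨ ∃ q, q <+: r ∧ l ++ q = p := by
  constructor
  · intro hp
    rcases List.prefix_or_prefix_of_prefix hp (List.prefix_append l r) with h | ⟨q, rfl⟩
    · exact .inl h
    · exact .inr ⟨q, (List.prefix_append_right_inj l).1 hp, rfl⟩
  · rintro (h | ⟨q, h, rfl⟩)
    · exact h.trans (List.prefix_append l r)
    · exact (List.prefix_append_right_inj l).2 h

lemma forall_prefix_append_iff {φ : List α → Prop} {l r : List α} :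
    (∀ p, p <+: l ++ r → φ p) ↔ (∀ p, p <+: l → φ p) ∧ ∀ q, q <+: r → φ (l ++ q) := by
  simp only [prefix_append_iff, or_imp, forall_and, forall_exists_index, and_imp]
  exact and_congr_right fun _ => ⟨fun h q hq => h _ q hq rfl, by rintro h _ q hq rfl; exact h q hq⟩

lemma forall_prefix_cons_iff {φ : List α → Prop} {a : α} {l : List α} :
    (∀ p, p <+: a :: l → φ p) ↔ φ [] ∧ ∀ p, p <+: l → φ (a :: p) := by
  simp only [List.prefix_cons_iff, or_imp, forall_and, forall_eq, forall_exists_index, and_imp]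
  exact and_congr_right fun _ => ⟨fun h p hp => h _ p rfl hp, by rintro h _ p rfl hp; exact h p hp⟩

lemma forall_prefix_map_iff {f : α → β} {φ : List β → Prop} {l : List α} :
    (∀ p, p <+: l.map f → φ p) ↔ ∀ p, p <+: l → φ (p.map f) := by
  simp only [List.prefix_map_iff, forall_exists_index, and_imp]
  exact ⟨fun h p hp => h _ p hp rfl, by rintro h _ p hp rfl; exact h p hp⟩

lemma forall_prefix_nil_iff {φ : List α → Prop} : (∀ p, p <+: [] → φ p) ↔ φ [] := by
  simp only [List.prefix_nil, forall_eq]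

lemma exists_append_cons_of_lt_countP {f : α → Bool} {l : List α} {t : ℕ} (h : t < l.countP f) :
    ∃ p a q, l = p ++ a :: q ∧ f a ∧ p.countP f = t := by
  induction l generalizing t with
  | nil => simp at h
  | cons b l ih =>
    by_cases hb : f b
    · cases t with
      | zero => exact ⟨[], b, l, rfl, hb, rfl⟩
      | succ t =>
        obtain ⟨p, a, q, rfl, ha, hp⟩ := ih (t := t) (by simpa [hb] using h)
        exact ⟨b :: p, a, q, rfl, ha, by simp [hb, hp]⟩
    · obtain ⟨p, a, q, rfl, ha, hp⟩ := ih (t := t) (by simpa [hb] using h)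
      exact ⟨b :: p, a, q, rfl, ha, by simp [hb, hp]⟩

lemma append_cons_inj_of_countP_eq {f : α → Bool} {p q p' q' : List α} {a a' : α} (ha : f a)
    (ha' : f a') (hp : p.countP f = p'.countP f) (h : p ++ a :: q = p' ++ a' :: q') :
    p = p' ∧ a = a' ∧ q = q' := by
  induction p generalizing p' with
  | nil =>
    cases p' with
    | nil => exact ⟨rfl, List.cons.inj h⟩
    | cons b' p' =>
      obtain ⟨rfl, -⟩ := List.cons.inj h
      simp [ha] at hp
  | cons b p ih =>
    cases p' with
    | nil =>
      obtain ⟨rfl, -⟩ := List.cons.inj h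
      simp [ha'] at hp
    | cons b' p' =>
      obtain ⟨rfl, htail⟩ := List.cons.inj h
      obtain ⟨rfl, haq⟩ := ih (by simpa [List.countP_cons] using hp) htail
      exact ⟨rfl, haq⟩

lemma card_filter_Ico_eq_countP {p : ℕ → Prop} [DecidablePred p] {f : α → Bool} {l : List α}
    (h : ∀ q a r, l = q ++ a :: r → (p (q.length + 1) ↔ f a)) :
    ((Finset.Ico 1 (l.length + 1)).filter p).card = l.countP f := by
  induction l using List.reverseRecOn with
  | nil => simp
  | append_singleton l a ih =>
    have hl := ih fun q b r hq => h q b (r ++ [a]) (by simp [hq])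
    have ha := h l a [] rfl
    rw [List.length_append, List.length_singleton, ← Finset.insert_Ico_right_eq_Ico_add_one
      (Nat.le_add_left 1 l.length), Finset.filter_insert, List.countP_append, ← hl]
    by_cases hp : p (l.length + 1)
    · simp [hp, ha.1 hp]
    · simp [hp, mt ha.2 hp]

lemma getElem?_append_cons_eq_some_iff {p q : List α} {a : α} (hp : a ∉ p) {k : ℕ} :
    (p ++ a :: q)[k]? = some a ↔ k = p.length ∨ ∃ j, k = p.length + 1 + j ∧ q[j]? = some a := by
  rcases lt_trichotomy k p.length with h | rfl | h
  · rw [List.getElem?_append_left h]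
    exact ⟨fun hk => absurd (List.mem_of_getElem? hk) hp, by omega⟩
  · simp
  · obtain ⟨j, rfl⟩ := Nat.exists_eq_add_of_lt h
    rw [List.getElem?_append_right h.le, Nat.add_assoc, Nat.add_sub_cancel_left,
      List.getElem?_cons_succ]
    exact ⟨fun hj => .inr ⟨j, by omega, hj⟩, by grind⟩

lemma forall_getElem?_eq_some_iff_eq {l : List α} {a : α} {i : ℕ} :
    (∀ k, l[k]? = some a ↔ k = i) ↔ ∃ p q, l = p ++ a :: q ∧ a ∉ p ∧ a ∉ q ∧ p.length = i := by
  constructor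
  · intro h
    obtain ⟨p, q, rfl, hp⟩ :=
      List.eq_append_cons_of_mem (List.mem_of_getElem? ((h i).2 rfl))
    simp only [getElem?_append_cons_eq_some_iff hp] at h
    have hi : p.length = i := (h _).1 (.inl rfl)
    refine ⟨p, q, rfl, hp, fun hq => ?_, hi⟩
    obtain ⟨j, hj⟩ := List.mem_iff_getElem?.1 hq
    have := (h _).1 (.inr ⟨j, rfl, hj⟩)
    omega
  · rintro ⟨p, q, rfl, hp, hq, rfl⟩ k
    have hq' (j : ℕ) : q[j]? ≠ some a := fun hj => hq (List.mem_of_getElem? hj)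
    simp only [getElem?_append_cons_eq_some_iff hp, hq', and_false, exists_false, or_false]

lemma forall_getElem?_eq_some_iff_eq_or_eq {l : List α} {a : α} {i j : ℕ} :
    (i < j ∧ ∀ k, l[k]? = some a ↔ k = i ∨ k = j) ↔
      ∃ p m q, l = p ++ a :: (m ++ a :: q) ∧ a ∉ p ∧ a ∉ m ∧ a ∉ q ∧
        p.length = i ∧ p.length + m.length + 1 = j := by
  constructor
  · rintro ⟨hij, h⟩
    obtain ⟨p, r, rfl, hp⟩ :=
      List.eq_append_cons_of_mem (List.mem_of_getElem? ((h i).2 (.inl rfl)))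
    simp only [getElem?_append_cons_eq_some_iff hp] at h
    have hi : p.length = i := by
      have hi' := (h i).2 (.inl rfl)
      have hp' := (h p.length).1 (.inl rfl)
      omega
    have hr (k : ℕ) : r[k]? = some a ↔ k = j - i - 1 := by
      have hk := h (p.length + 1 + k)
      simp only [Nat.add_left_cancel_iff, exists_eq_left'] at hk
      rw [or_iff_right (by omega)] at hk
      rw [hk]
      omega
    obtain ⟨m, q, rfl, hm, hq, hj⟩ := forall_getElem?_eq_some_iff_eq.1 hr
    exact ⟨p, m, q, rfl, hp, hm, hq, hi, by omega⟩
  · rintro ⟨p, m, q, rfl, hp, hm, hq, rfl, rfl⟩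
    have hr := forall_getElem?_eq_some_iff_eq.2 ⟨m, q, rfl, hm, hq, rfl⟩
    refine ⟨by omega, fun k => ?_⟩
    simp only [getElem?_append_cons_eq_some_iff hp, hr, exists_eq_right]
    omega

/-- The list is empty or its last letter satisfies `f`. -/
def EndsIn (f : α → Bool) (l : List α) : Prop := ∀ a ∈ l.getLast?, f a

lemma endsIn_nil (f : α → Bool) : EndsIn f [] := by
  simp [EndsIn]

lemma endsIn_append_singleton {f : α → Bool} {l : List α} {a : α} :
    EndsIn f (l ++ [a]) ↔ f a := by
  simp [EndsIn]

lemma EndsIn.append {f : α → Bool} {l r : List α} (hl : EndsIn f l) :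
    EndsIn f (l ++ r) ↔ EndsIn f r := by
  rcases r.eq_nil_or_concat' with rfl | ⟨r, a, rfl⟩
  · simpa [endsIn_nil] using hl
  · rw [← List.append_assoc, endsIn_append_singleton, endsIn_append_singleton]

lemma EndsIn.of_append {f : α → Bool} {l r : List α} (h : EndsIn f (l ++ r)) : EndsIn f r := by
  intro a ha
  exact h a (by simp [List.getLast?_append, Option.mem_def.1 ha])

lemma endsIn_map {g : β → α} {f : α → Bool} {l : List β} :
    EndsIn f (l.map g) ↔ EndsIn (f ∘ g) l := by
  simp [EndsIn]

lemma EndsIn.eq_nil_of_countP_eq_zero {f : α → Bool} {l : List α} (hl : EndsIn f l)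
    (h : l.countP f = 0) : l = [] := by
  rcases l.eq_nil_or_concat' with rfl | ⟨l, a, rfl⟩
  · rfl
  · simp [endsIn_append_singleton.1 hl] at h

lemma EndsIn.countP_take_append_lt_iff {f : α → Bool} {l : List α} (hl : EndsIn f l) (r : List α)
    (i : ℕ) : ((l ++ r).take i).countP f < l.countP f ↔ i < l.length := by
  constructor
  · contrapose!
    intro hi
    rw [List.take_append, List.take_of_length_le hi, List.countP_append]
    exact Nat.le_add_right _ _
  · intro hi
    rw [List.take_append_of_le_length hi.le]
    have hdrop : 0 < (l.drop i).countP f := by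
      refine Nat.pos_of_ne_zero fun h => ?_
      rw [← List.take_append_drop i l] at hl
      have := congrArg List.length (hl.of_append.eq_nil_of_countP_eq_zero h)
      rw [List.length_drop, List.length_nil] at this
      omega
    have := congrArg (List.countP f) (List.take_append_drop i l)
    rw [List.countP_append] at this
    omega

lemma exists_endsIn_append_of_le_countP {f : α → Bool} {l : List α} {t : ℕ} (h : t ≤ l.countP f) :
    ∃ p q, l = p ++ q ∧ EndsIn f p ∧ p.countP f = t := by
  rcases t with _ | t
  · exact ⟨[], l, rfl, endsIn_nil f, rfl⟩
  · obtain ⟨p, a, q, rfl, ha, rfl⟩ := exists_append_cons_of_lt_countP h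
    exact ⟨p ++ [a], q, by simp, endsIn_append_singleton.2 ha, by simp [ha]⟩

/-- The `(t + 1)`-st letter of `l` satisfying `f` immediately follows the `t`-th one
(for `t = 0`: it is the first letter of `l`). -/
def Repeats (f : α → Bool) (t : ℕ) (l : List α) : Prop :=
  ∃ p a q, l = p ++ a :: q ∧ f a ∧ p.countP f = t ∧ EndsIn f p

lemma Repeats.lt_countP {f : α → Bool} {t : ℕ} {l : List α} (h : Repeats f t l) :
    t < l.countP f := by
  obtain ⟨p, a, q, rfl, ha, rfl, -⟩ := h
  simp [ha]

lemma repeats_append_cons_iff {f : α → Bool} {p q : List α} {a : α} (ha : f a) :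
    Repeats f (p.countP f) (p ++ a :: q) ↔ EndsIn f p := by
  refine ⟨?_, fun hp => ⟨p, a, q, rfl, ha, rfl, hp⟩⟩
  rintro ⟨p', a', q', h, ha', hp', he⟩
  rwa [(append_cons_inj_of_countP_eq ha ha' hp'.symm h).1]

lemma repeats_zero_cons_iff {f : α → Bool} {a : α} {l : List α} :
    Repeats f 0 (a :: l) ↔ f a := by
  constructor
  · rintro ⟨p, b, q, h, hb, hp, he⟩
    obtain rfl := he.eq_nil_of_countP_eq_zero hp
    obtain ⟨rfl, -⟩ := List.cons.inj h
    exact hb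
  · exact fun ha => ⟨[], a, l, rfl, ha, rfl, endsIn_nil f⟩

lemma repeats_append_iff_of_lt {f : α → Bool} {l : List α} {t : ℕ} (ht : t < l.countP f)
    (r : List α) : Repeats f t (l ++ r) ↔ Repeats f t l := by
  obtain ⟨p, a, q, rfl, ha, rfl⟩ := exists_append_cons_of_lt_countP ht
  rw [List.append_assoc, List.cons_append, repeats_append_cons_iff ha, repeats_append_cons_iff ha]

lemma EndsIn.repeats_append_iff {f : α → Bool} {l : List α} (hl : EndsIn f l) (t : ℕ)
    (r : List α) : Repeats f (l.countP f + t) (l ++ r) ↔ Repeats f t r := by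
  by_cases ht : t < r.countP f
  · obtain ⟨p, a, q, rfl, ha, rfl⟩ := exists_append_cons_of_lt_countP ht
    rw [← List.append_assoc, ← List.countP_append, repeats_append_cons_iff ha,
      repeats_append_cons_iff ha, hl.append]
  · refine iff_of_false (fun h => ht ?_) fun h => ht h.lt_countP
    simpa using h.lt_countP

lemma repeats_map {g : β → α} {f : α → Bool} {t : ℕ} {l : List β} :
    Repeats f t (l.map g) ↔ Repeats (f ∘ g) t l := by
  constructor
  · rintro ⟨p, a, q, h, ha, hp, he⟩
    obtain ⟨p, r, rfl, rfl, hr⟩ := List.map_eq_append_iff.1 h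
    obtain ⟨b, q, rfl, rfl, rfl⟩ := List.map_eq_cons_iff.1 hr
    exact ⟨p, b, q, rfl, ha, by rwa [List.countP_map] at hp, endsIn_map.1 he⟩
  · rintro ⟨p, a, q, rfl, ha, hp, he⟩
    exact ⟨p.map g, g a, q.map g, by simp, ha, by rwa [List.countP_map], endsIn_map.2 he⟩

lemma repeats_reverse_append_singleton_iff {f : α → Bool} {a : α} (ha : f a) {l : List α}
    {s t : ℕ} (ht : 0 < t) (hl : l.countP f = t + s) :
    Repeats f t (l.reverse ++ [a]) ↔ Repeats f s l := by
  obtain ⟨p, b, q, rfl, hb, rfl⟩ := exists_append_cons_of_lt_countP (show s < l.countP f by omega)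
  have hq : (q.reverse ++ [b]).countP f = t := by
    simp only [List.countP_append, List.countP_reverse, List.countP_cons_of_pos, List.countP_nil,
      hb] at hl ⊢
    omega
  have hrev : (p ++ b :: q).reverse ++ [a] = (q.reverse ++ [b]) ++ (p.reverse ++ [a]) := by simp
  rw [repeats_append_cons_iff hb, hrev, ← hq, ← Nat.add_zero (List.countP f _),
    (endsIn_append_singleton.2 hb).repeats_append_iff]
  rcases p.eq_nil_or_concat' with rfl | ⟨p, c, rfl⟩
  · simp [repeats_zero_cons_iff, ha, endsIn_nil]
  · simp [repeats_zero_cons_iff, endsIn_append_singleton]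

/-- Insert the letter `a` immediately after the `d`-th letter satisfying `f`
(at the beginning for `d = 0`). -/
def insertAfter (f : α → Bool) (a : α) : ℕ → List α → List α
  | 0, l => a :: l
  | _ + 1, [] => []
  | d + 1, b :: l => b :: insertAfter f a (if f b then d else d + 1) l

lemma EndsIn.insertAfter_append {f : α → Bool} {p : List α} (hp : EndsIn f p) (a : α)
    (q : List α) : insertAfter f a (p.countP f) (p ++ q) = p ++ a :: q := by
  induction p with
  | nil => cases q <;> rfl
  | cons b p ih =>
    have hp' : EndsIn f p := EndsIn.of_append (l := [b]) hp
    obtain ⟨d, hd⟩ : ∃ d, (b :: p).countP f = d + 1 :=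
      Nat.exists_eq_succ_of_ne_zero fun h => by simpa using hp.eq_nil_of_countP_eq_zero h
    have hd' : (if f b then d else d + 1) = p.countP f := by
      rw [List.countP_cons] at hd
      split_ifs at hd ⊢ <;> omega
    rw [hd, List.cons_append, insertAfter, hd', ih hp', List.cons_append]

lemma exists_insertAfter_eq_append {f : α → Bool} {l : List α} {d : ℕ} (h : d ≤ l.countP f)
    (a : α) : ∃ p q, l = p ++ q ∧ insertAfter f a d l = p ++ a :: q ∧ EndsIn f p ∧
      p.countP f = d := by
  obtain ⟨p, q, rfl, hp, rfl⟩ := exists_endsIn_append_of_le_countP h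
  exact ⟨p, q, rfl, hp.insertAfter_append a q, hp, rfl⟩

lemma insertAfter_injOn {f : α → Bool} {a : α} (ha : f a) (d : ℕ) :
    Set.InjOn (insertAfter f a d) {l | d ≤ l.countP f} := by
  intro l hl l' hl' h
  obtain ⟨p, q, rfl, hp, -, hd⟩ := exists_insertAfter_eq_append hl a
  obtain ⟨p', q', rfl, hp', -, hd'⟩ := exists_insertAfter_eq_append hl' a
  obtain ⟨rfl, -, rfl⟩ := append_cons_inj_of_countP_eq ha ha (hd.trans hd'.symm)
    (hp.symm.trans (h.trans hp'))
  rfl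

end ListLemmas

section Runs

/-- For each occurrence of the letter `x` in `w`, whether it is the last letter of its run. -/
def runEnds (x : Bool) : List Bool → List Bool
  | [] => []
  | y :: w => if y = x then decide (w.head? ≠ some x) :: runEnds x w else runEnds x w

lemma length_runEnds (x : Bool) (w : List Bool) : (runEnds x w).length = w.count x := by
  induction w with
  | nil => rfl
  | cons y w ih => by_cases h : y = x <;> simp [runEnds, h, ih]

lemma runEnds_append_not_cons (x : Bool) (p q : List Bool) :
    runEnds x (p ++ (!x) :: q) = runEnds x p ++ runEnds x q := by
  induction p with
  | nil => simp [runEnds]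
  | cons y p ih =>
    by_cases h : y = x
    · cases p <;> simp_all [runEnds]
    · simp [runEnds, h, ih]

lemma runEnds_not_append_cons (x : Bool) (p q : List Bool) :
    runEnds (!x) (p ++ x :: q) = runEnds (!x) p ++ runEnds (!x) q := by
  simpa only [Bool.not_not] using runEnds_append_not_cons (!x) p q

lemma getElem?_runEnds (x : Bool) (p q : List Bool) :
    (runEnds x (p ++ x :: q))[p.count x]? = some (decide (q.head? ≠ some x)) := by
  induction p with
  | nil => simp [runEnds]
  | cons y p ih => by_cases h : y = x <;> simp [runEnds, h, ih]

lemma endsIn_runEnds (x : Bool) (w : List Bool) : EndsIn id (runEnds x w) := by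
  induction w with
  | nil => exact endsIn_nil id
  | cons y w ih =>
    by_cases h : y = x
    · rw [runEnds, if_pos h]
      cases hw : runEnds x w with
      | nil =>
        have hx : x ∉ w := List.count_eq_zero.1 (by rw [← length_runEnds, hw, List.length_nil])
        have hhead : w.head? ≠ some x := fun h => hx (List.mem_of_head? h)
        simp [EndsIn, hhead]
      | cons b l =>
        rw [hw] at ih
        simpa [EndsIn, List.getLast?_cons_cons] using ih
    · rwa [runEnds, if_neg h]

/-- Runs of the two letters alternate. -/
lemma countP_take_runEnds (x : Bool) (p q : List Bool) :
    ((runEnds x (p ++ x :: q)).take (p.count x)).countP id +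
      (if (p ++ x :: q).head? = some x then 0 else 1) = (runEnds (!x) p).countP id := by
  induction p with
  | nil => simp [runEnds]
  | cons y p ih =>
    cases p with
    | nil => cases x <;> cases y <;> simp [runEnds]
    | cons z p => cases x <;> cases y <;> cases z <;> simp_all [runEnds]

lemma runEnds_injective {w v : List Bool} (hhead : w.head? = v.head?)
    (h : ∀ x, runEnds x w = runEnds x v) : w = v := by
  induction w generalizing v with
  | nil => exact (List.head?_eq_none_iff.1 hhead.symm).symm
  | cons y w ih =>
    obtain ⟨v, rfl⟩ := List.head?_eq_some_iff.1 hhead.symm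
    have hcons := h y
    simp only [runEnds, if_true, List.cons.injEq, decide_eq_decide] at hcons
    have htail (x : Bool) : runEnds x w = runEnds x v := by
      rcases Bool.eq_or_eq_not x y with rfl | rfl
      · exact hcons.2
      · simpa [runEnds] using h (!y)
    have hlen : w.length = v.length := by
      rw [← List.count_true_add_count_false w, ← List.count_true_add_count_false v]
      simp only [← length_runEnds, htail]
    rw [ih _ htail]
    cases w with
    | nil => rw [List.length_eq_zero_iff.1 hlen.symm]
    | cons a w =>
      obtain ⟨b, v, rfl⟩ := List.exists_cons_of_length_eq_add_one hlen.symm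
      have hab : ¬ a = y ↔ ¬ b = y := by simpa using hcons.1
      cases a <;> cases b <;> cases y <;> simp_all

lemma exists_runEnds_eq (x : Bool) (f g : List Bool) (hf : f ≠ []) (hfe : EndsIn id f)
    (hge : EndsIn id g) (hle : g.countP id ≤ f.countP id)
    (hle' : f.countP id ≤ g.countP id + 1) :
    ∃ w, w.head? = some x ∧ runEnds x w = f ∧ runEnds (!x) w = g := by
  obtain ⟨a, f, rfl⟩ := List.exists_cons_of_ne_nil hf
  have hfe' : EndsIn id f := EndsIn.of_append (l := [a]) hfe
  cases a with
  | false =>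
    have hf' : f ≠ [] := by rintro rfl; simp [EndsIn] at hfe
    obtain ⟨v, hv, hx, hn⟩ := exists_runEnds_eq x f g hf' hfe' hge
      (by simpa using hle) (by simpa using hle')
    exact ⟨x :: v, rfl, by simp [runEnds, hv, hx], by simp [runEnds, hn]⟩
  | true =>
    by_cases hg : g = []
    · subst hg
      obtain rfl := hfe'.eq_nil_of_countP_eq_zero (by simpa using hle')
      exact ⟨[x], rfl, by simp [runEnds], by simp [runEnds]⟩
    · obtain ⟨v, hv, hx, hn⟩ := exists_runEnds_eq (!x) g f hg hge hfe'
        (Nat.le_of_succ_le_succ (by simpa using hle')) (by simpa using hle)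
      rw [Bool.not_not] at hn
      exact ⟨x :: v, rfl, by simp [runEnds, hv, hn], by simp [runEnds, hx]⟩
termination_by f.length + g.length
decreasing_by
  all_goals subst_vars; rw [List.length_cons]; omega

end Runs

section Gaps

/-- The number of letters other than `x` strictly between the `i`-th and the `(i+1)`-st `x` of `w`
(with `i` 1-indexed). Both `rStat` and `sStat` unfold to this, for `x = true` and `x = false`. -/
def gapStat (x : Bool) (w : List Bool) (i : ℕ) : ℕ :=
  ((w.take ((w.findIdxs (· == x)).getD i 0)).drop
    ((w.findIdxs (· == x)).getD (i - 1) 0 + 1)).count (!x)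

lemma getD_findIdxs_append_cons (x : Bool) (p q : List Bool) :
    ((p ++ x :: q).findIdxs (· == x)).getD (p.count x) 0 = p.length := by
  have hlen : (p.findIdxs (· == x)).length = p.count x := List.length_findIdxs
  rw [List.findIdxs_append, List.getD_append_right _ _ _ _ hlen.le, hlen]
  simp [List.findIdxs_cons]

lemma gapStat_append_cons_replicate (x : Bool) (p q : List Bool) (m : ℕ) :
    gapStat x (p ++ x :: (List.replicate m (!x) ++ x :: q)) (p.count x + 1) = m := by
  have hleft := getD_findIdxs_append_cons x p (List.replicate m (!x) ++ x :: q)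
  have hright := getD_findIdxs_append_cons x ((p ++ [x]) ++ List.replicate m (!x)) q
  have hcount : ((p ++ [x]) ++ List.replicate m (!x)).count x = p.count x + 1 := by
    simp [List.count_replicate]
  have hassoc : ((p ++ [x]) ++ List.replicate m (!x)) ++ x :: q =
      p ++ x :: (List.replicate m (!x) ++ x :: q) := by simp
  rw [hcount, hassoc] at hright
  rw [gapStat, Nat.add_sub_cancel, hleft, hright, ← hassoc, List.take_left,
    List.drop_left' (by simp)]
  simp

lemma exists_append_cons_replicate_of_lt_count {x : Bool} {w : List Bool} {i : ℕ}
    (h : i + 1 < w.count x) :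
    ∃ p m q, w = p ++ x :: (List.replicate m (!x) ++ x :: q) ∧ p.count x = i := by
  obtain ⟨p, a, r, rfl, ha, rfl⟩ := exists_append_cons_of_lt_countP (Nat.lt_of_succ_lt h)
  obtain rfl := beq_iff_eq.1 ha
  have hr : 0 < r.count a := by
    rw [List.count_append, List.count_cons_self] at h
    change p.count a + 1 < p.count a + (r.count a + 1) at h
    omega
  obtain ⟨l, b, q, rfl, hb, hl⟩ := exists_append_cons_of_lt_countP hr
  obtain rfl := beq_iff_eq.1 hb
  have hrep : l = List.replicate l.length (!b) :=
    List.eq_replicate_iff.2 ⟨rfl, fun c hc => Bool.eq_not_of_ne fun h =>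
      List.count_eq_zero.1 hl (h ▸ hc)⟩
  exact ⟨p, l.length, q, by rw [← hrep], rfl⟩

variable {x a : Bool} {w P R : List Bool}

lemma exists_gap_decomposition (h : runEnds x w = P ++ a :: R) (hR : R ≠ []) :
    ∃ p m q, w = p ++ x :: (List.replicate m (!x) ++ x :: q) ∧ p.count x = P.length ∧
      gapStat x w (P.length + 1) = m := by
  have hlen := length_runEnds x w
  rw [h, List.length_append, List.length_cons] at hlen
  have hpos := List.length_pos_of_ne_nil hR
  obtain ⟨p, m, q, rfl, hp⟩ := exists_append_cons_replicate_of_lt_count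
    (x := x) (w := w) (i := P.length) (by omega)
  exact ⟨p, m, q, rfl, hp, hp ▸ gapStat_append_cons_replicate x p q m⟩

lemma gapStat_pos_iff (h : runEnds x w = P ++ a :: R) (hR : R ≠ []) :
    0 < gapStat x w (P.length + 1) ↔ a := by
  obtain ⟨p, m, q, rfl, hp, hm⟩ := exists_gap_decomposition h hR
  have ha := getElem?_runEnds x p (List.replicate m (!x) ++ x :: q)
  rw [h, hp, List.getElem?_append_right le_rfl, Nat.sub_self, List.getElem?_cons_zero] at ha
  rw [hm, Option.some.inj ha]
  cases m <;> simp [List.replicate_succ]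

lemma gapStat_eq_one_iff (h : runEnds x w = P ++ true :: R) (hR : R ≠ []) :
    gapStat x w (P.length + 1) = 1 ↔
      Repeats id (P.countP id + if w.head? = some x then 0 else 1) (runEnds (!x) w) := by
  have hpos := (gapStat_pos_iff h hR).2 rfl
  obtain ⟨p, m, q, rfl, hp, hm⟩ := exists_gap_decomposition h hR
  have hcount := countP_take_runEnds x p (List.replicate m (!x) ++ x :: q)
  rw [h, hp, List.take_left] at hcount
  rw [hcount, runEnds_not_append_cons, ← Nat.add_zero (List.countP id _),
    (endsIn_runEnds (!x) p).repeats_append_iff]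
  rw [hm] at hpos ⊢
  match m, hpos with
  | 1, _ => simp [runEnds, repeats_zero_cons_iff]
  | m + 2, _ => simp [runEnds, repeats_zero_cons_iff, List.replicate_succ]

end Gaps

section Columns

lemma IsDyckWord.head?_eq {n : ℕ} {w : List Bool} (hw : IsDyckWord n w) (hn : 0 < n) :
    w.head? = some true := by
  obtain ⟨hlen, -, -, hpre⟩ := hw
  cases w with
  | nil =>
    rw [List.length_nil] at hlen
    omega
  | cons b w =>
    cases b with
    | true => rfl
    | false => simpa using hpre [false] (by simp)

lemma IsDyckWord.exists_eq_append_false {n : ℕ} {w : List Bool} (hw : IsDyckWord n w)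
    (hn : 0 < n) : ∃ q, w = q ++ [false] := by
  obtain ⟨hlen, htrue, hfalse, hpre⟩ := hw
  rcases w.eq_nil_or_concat' with rfl | ⟨q, b, rfl⟩
  · rw [List.length_nil] at hlen
    omega
  · cases b with
    | false => exact ⟨q, rfl⟩
    | true =>
      have := hpre q (by simp)
      simp only [List.count_append, List.count_singleton, beq_iff_eq, Bool.true_eq_false, if_false,
        if_true] at htrue hfalse
      omega

lemma forall_prefix_count_le_iff {w : List Bool} :
    (∀ p, p <+: w → p.count false ≤ p.count true) ↔
      ∀ q r, w = q ++ false :: r → q.count false < q.count true := by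
  constructor
  · rintro h q r rfl
    simpa using h (q ++ [false]) (by simp)
  · intro h p hp
    induction p using List.reverseRecOn with
    | nil => simp
    | append_singleton q b ih =>
      obtain ⟨r, rfl⟩ := hp
      cases b with
      | true => simpa using (ih ⟨true :: r, by simp⟩).trans (Nat.le_add_right _ 1)
      | false => simpa using h q r (by simp)

/-- As runs alternate, the runs of down steps completed within `q` number one less than the runs of
up steps in `q`. The inequality therefore says that the last of these runs of up steps is not
contained in the first `q.count false` up steps. -/
lemma countP_take_runEnds_le_iff {q r : List Bool} (h : (q ++ false :: r).head? = some true) :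
    ((runEnds true (q ++ false :: r)).take (q.count false)).countP id ≤
        ((runEnds false (q ++ false :: r)).take (q.count false)).countP id ↔
      q.count false < q.count true := by
  have hruns := countP_take_runEnds false q r
  simp only [h, Option.some.injEq, Bool.true_eq_false, if_false, Bool.not_false] at hruns
  rw [← Nat.lt_add_one_iff, hruns, ← length_runEnds true q,
    ← (endsIn_runEnds true q).countP_take_append_lt_iff (runEnds true r)]
  exact (runEnds_append_not_cons true q r) ▸ Iff.rfl

lemma isDyckWord_iff_runEnds {n : ℕ} {w : List Bool} (h : w.head? = some true) :
    IsDyckWord n w ↔ w.count true = n ∧ w.count false = n ∧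
      ∀ i < n, ((runEnds true w).take i).countP id ≤ ((runEnds false w).take i).countP id := by
  have hlen := List.count_true_add_count_false w
  rw [IsDyckWord, forall_prefix_count_le_iff]
  constructor
  · rintro ⟨-, ht, hf, hpre⟩
    refine ⟨ht, hf, fun i hi => ?_⟩
    obtain ⟨q, a, r, rfl, ha, rfl⟩ := exists_append_cons_of_lt_countP (hi.trans_eq hf.symm)
    obtain rfl := beq_iff_eq.1 ha
    exact (countP_take_runEnds_le_iff h).2 (hpre q r rfl)
  · rintro ⟨ht, hf, hdom⟩
    refine ⟨by omega, ht, hf, ?_⟩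
    rintro q r rfl
    refine (countP_take_runEnds_le_iff h).1 (hdom _ ?_)
    rw [← hf, List.count_append, List.count_cons_self]
    omega

lemma countP_runEnds_eq {x : Bool} {q : List Bool} (h : (q ++ [!x]).head? = some x) :
    (runEnds x (q ++ [!x])).countP id = (runEnds (!x) (q ++ [!x])).countP id := by
  have hruns := countP_take_runEnds x (q ++ [!x]) []
  rw [List.append_assoc, List.singleton_append, runEnds_append_not_cons, List.take_left'
    (by simp [length_runEnds])] at hruns
  rw [← hruns, runEnds_append_not_cons]
  cases q <;> simp_all [runEnds]

/-- The word whose `i`-th letter records whether the `i`-th up step and the `i`-th down step of `w`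
end their runs, i.e. (for `i` less than the semilength) whether `rᵢ > 0` and whether `sᵢ > 0`. -/
def columns (w : List Bool) : List (Bool × Bool) := (runEnds true w).zip (runEnds false w)

/-- The words on `Bool × Bool` that are the columns of a Dyck word of semilength `n`. -/
def IsColumnWord (n : ℕ) (c : List (Bool × Bool)) : Prop :=
  c.length = n ∧ EndsIn Prod.fst c ∧ EndsIn Prod.snd c ∧ c.countP Prod.fst = c.countP Prod.snd ∧
    ∀ p, p <+: c → p.countP Prod.fst ≤ p.countP Prod.snd

variable {n : ℕ} {w : List Bool}

lemma IsDyckWord.map_fst_columns (hw : IsDyckWord n w) :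
    (columns w).map Prod.fst = runEnds true w :=
  List.map_fst_zip (by rw [length_runEnds, length_runEnds, hw.2.1, hw.2.2.1])

lemma IsDyckWord.map_snd_columns (hw : IsDyckWord n w) :
    (columns w).map Prod.snd = runEnds false w :=
  List.map_snd_zip (by rw [length_runEnds, length_runEnds, hw.2.1, hw.2.2.1])

lemma IsDyckWord.length_columns (hw : IsDyckWord n w) : (columns w).length = n := by
  rw [← List.length_map Prod.fst, hw.map_fst_columns, length_runEnds, hw.2.1]

lemma countP_fst_eq (c : List (Bool × Bool)) : c.countP Prod.fst = (c.map Prod.fst).countP id := by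
  rw [List.countP_map, Function.id_comp]

lemma countP_snd_eq (c : List (Bool × Bool)) : c.countP Prod.snd = (c.map Prod.snd).countP id := by
  rw [List.countP_map, Function.id_comp]

lemma IsDyckWord.isColumnWord_columns (hw : IsDyckWord n w) (hn : 0 < n) :
    IsColumnWord n (columns w) := by
  have hhead := hw.head?_eq hn
  have heq : (columns w).countP Prod.fst = (columns w).countP Prod.snd := by
    obtain ⟨q, hq⟩ := hw.exists_eq_append_false hn
    rw [countP_fst_eq, countP_snd_eq, hw.map_fst_columns, hw.map_snd_columns, hq]
    exact countP_runEnds_eq (x := true) (hq ▸ hhead)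
  refine ⟨hw.length_columns, ?_, ?_, heq, fun p hp => ?_⟩
  · rw [← Function.id_comp Prod.fst, ← endsIn_map, hw.map_fst_columns]
    exact endsIn_runEnds true w
  · rw [← Function.id_comp Prod.snd, ← endsIn_map, hw.map_snd_columns]
    exact endsIn_runEnds false w
  · rcases hp.length_le.lt_or_eq with hlt | hlen
    · have hdom := ((isDyckWord_iff_runEnds hhead).1 hw).2.2 _ (hlt.trans_eq hw.length_columns)
      rwa [← hw.map_fst_columns, ← hw.map_snd_columns, ← List.map_take, ← List.map_take,
        ← List.prefix_iff_eq_take.1 hp, ← countP_fst_eq, ← countP_snd_eq] at hdom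
    · exact (hp.eq_of_length hlen ▸ heq).le

lemma columns_bijOn (hn : 0 < n) :
    Set.BijOn columns {w | IsDyckWord n w} {c | IsColumnWord n c} := by
  refine ⟨fun w hw => hw.isColumnWord_columns hn, fun w hw v hv h => ?_, fun c hc => ?_⟩
  · refine runEnds_injective (by rw [hw.head?_eq hn, hv.head?_eq hn]) ?_
    rintro (_ | _)
    · rw [← hw.map_snd_columns, ← hv.map_snd_columns, h]
    · rw [← hw.map_fst_columns, ← hv.map_fst_columns, h]
  · obtain ⟨rfl, hfst, hsnd, heq, hdom⟩ := hc
    obtain ⟨w, hhead, htrue, hfalse⟩ := exists_runEnds_eq true (c.map Prod.fst) (c.map Prod.snd)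
      (by simpa using List.length_pos_iff.1 hn) (endsIn_map.2 hfst) (endsIn_map.2 hsnd)
      (by rw [← countP_fst_eq, ← countP_snd_eq, heq])
      (by rw [← countP_fst_eq, ← countP_snd_eq, heq]; exact Nat.le_succ _)
    rw [Bool.not_true] at hfalse
    refine ⟨w, (isDyckWord_iff_runEnds hhead).2 ⟨?_, ?_, fun i _ => ?_⟩, ?_⟩
    · rw [← length_runEnds, htrue, List.length_map]
    · rw [← length_runEnds, hfalse, List.length_map]
    · rw [htrue, hfalse, ← List.map_take, ← List.map_take, ← countP_fst_eq, ← countP_snd_eq]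
      exact hdom _ (List.take_prefix i c)
    · rw [columns, htrue, hfalse, List.zip_map']
      exact List.map_id c

variable {P R : List (Bool × Bool)} {a : Bool × Bool}

lemma IsDyckWord.rStat_pos_iff (hw : IsDyckWord n w) (h : columns w = P ++ a :: R) (hR : R ≠ []) :
    0 < rStat w (P.length + 1) ↔ a.1 := by
  have hends := hw.map_fst_columns
  rw [h, List.map_append, List.map_cons] at hends
  have hpos := gapStat_pos_iff hends.symm (by simpa using hR)
  rwa [List.length_map] at hpos

lemma IsDyckWord.sStat_pos_iff (hw : IsDyckWord n w) (h : columns w = P ++ a :: R) (hR : R ≠ []) :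
    0 < sStat w (P.length + 1) ↔ a.2 := by
  have hends := hw.map_snd_columns
  rw [h, List.map_append, List.map_cons] at hends
  have hpos := gapStat_pos_iff hends.symm (by simpa using hR)
  rwa [List.length_map] at hpos

lemma IsDyckWord.rStat_eq_one_iff (hw : IsDyckWord n w) (h : columns w = P ++ a :: R)
    (hR : R ≠ []) (ha : a.1) :
    rStat w (P.length + 1) = 1 ↔ Repeats Prod.snd (P.countP Prod.fst) (columns w) := by
  have hends := hw.map_fst_columns
  have hn : 0 < n := by simp [← hw.length_columns, h]
  rw [h, List.map_append, List.map_cons, ha] at hends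
  have hone := gapStat_eq_one_iff hends.symm (by simpa using hR)
  rw [hw.head?_eq hn, if_pos rfl, Nat.add_zero, Bool.not_true, ← hw.map_snd_columns, repeats_map,
    ← countP_fst_eq, List.length_map] at hone
  exact hone

lemma IsDyckWord.sStat_eq_one_iff (hw : IsDyckWord n w) (h : columns w = P ++ a :: R)
    (hR : R ≠ []) (ha : a.2) :
    sStat w (P.length + 1) = 1 ↔ Repeats Prod.fst (P.countP Prod.snd + 1) (columns w) := by
  have hends := hw.map_snd_columns
  have hn : 0 < n := by simp [← hw.length_columns, h]
  rw [h, List.map_append, List.map_cons, ha] at hends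
  have hone := gapStat_eq_one_iff hends.symm (by simpa using hR)
  rw [hw.head?_eq hn, if_neg (by simp), Bool.not_false, ← hw.map_fst_columns, repeats_map,
    ← countP_snd_eq, List.length_map] at hone
  exact hone

lemma IsDyckWord.xStat_eq_countP (hw : IsDyckWord n w) (h : columns w = P ++ R) (hR : R ≠ []) :
    xStat w (P.length + 1) = P.countP (· == (false, true)) := by
  refine card_filter_Ico_eq_countP ?_
  rintro q a r rfl
  rw [List.append_assoc, List.cons_append] at h
  rw [hw.sStat_pos_iff h (by simp [hR]), ← Nat.le_zero, ← not_lt, hw.rStat_pos_iff h (by simp [hR])]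
  obtain ⟨_ | _, _ | _⟩ := a <;> simp

lemma IsDyckWord.yStat_eq_countP (hw : IsDyckWord n w) (h : columns w = P ++ R) (hR : R ≠ []) :
    yStat w (P.length + 1) = P.countP (· == (true, false)) := by
  refine card_filter_Ico_eq_countP ?_
  rintro q a r rfl
  rw [List.append_assoc, List.cons_append] at h
  rw [hw.rStat_pos_iff h (by simp [hR]), ← Nat.le_zero, ← not_lt, hw.sStat_pos_iff h (by simp [hR])]
  obtain ⟨_ | _, _ | _⟩ := a <;> simp

end Columns

section TwoStars

lemma add_le_choose_add {r s : ℕ} (hr : 0 < r) (hs : 0 < s) : r + s ≤ (r + s).choose r := by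
  obtain ⟨r, rfl⟩ : ∃ k, r = k + 1 := Nat.exists_eq_add_of_le' hr
  induction s, hs using Nat.le_induction with
  | base => rw [Nat.choose_succ_self_right]
  | succ s _ ih =>
    have hpos : 0 < (r + 1 + s).choose r := Nat.choose_pos (by omega)
    rw [← Nat.add_assoc, Nat.choose_succ_succ']
    omega

lemma choose_add_eq_two_iff {r s : ℕ} (hr : 0 < r) (hs : 0 < s) :
    (r + s).choose r = 2 ↔ r = 1 ∧ s = 1 := by
  have := add_le_choose_add hr hs
  exact ⟨fun h => by omega, by rintro ⟨rfl, rfl⟩; rfl⟩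

lemma LStat_eq_four_iff {n : ℕ} {w : List Bool} {k₁ k₂ : ℕ} (h : twoStars n w k₁ k₂) :
    LStat n w = 4 ↔ (rStat w k₁ = 1 ∧ sStat w k₁ = 1) ∧ rStat w k₂ = 1 ∧ sStat w k₂ = 1 := by
  obtain ⟨hk₁, hk₂, hlt, ⟨hr₁, hs₁⟩, ⟨hr₂, hs₂⟩, honly⟩ := h
  have hprod : LStat n w = (rStat w k₁ + sStat w k₁).choose (rStat w k₁) *
      (rStat w k₂ + sStat w k₂).choose (rStat w k₂) := by
    refine Finset.prod_eq_mul k₁ k₂ hlt.ne ?_ (absurd hk₁) (absurd hk₂)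
    rintro j hj ⟨hj₁, hj₂⟩
    rcases Nat.eq_zero_or_pos (rStat w j) with hr | hr
    · simp [hr]
    rcases Nat.eq_zero_or_pos (sStat w j) with hs | hs
    · simp [hs]
    exact absurd (honly j hj ⟨hr, hs⟩) (by tauto)
  have hle₁ := add_le_choose_add hr₁ hs₁
  have hle₂ := add_le_choose_add hr₂ hs₂
  rw [hprod, ← choose_add_eq_two_iff hr₁ hs₁, ← choose_add_eq_two_iff hr₂ hs₂]
  refine ⟨fun h => ⟨?_, ?_⟩, fun h => by rw [h.1, h.2]⟩ <;> nlinarith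

variable {n : ℕ} {w : List Bool}

lemma IsDyckWord.exists_columns_eq_append (hw : IsDyckWord n w) (hn : 0 < n) :
    ∃ c, columns w = c ++ [(true, true)] := by
  obtain ⟨hlen, hfst, hsnd, -⟩ := hw.isColumnWord_columns hn
  rcases (columns w).eq_nil_or_concat' with h | ⟨c, ⟨a, b⟩, h⟩
  · rw [h, List.length_nil] at hlen
    omega
  · rw [h, endsIn_append_singleton] at hfst hsnd
    obtain rfl : a = true := hfst
    obtain rfl : b = true := hsnd
    exact ⟨c, h⟩

lemma IsDyckWord.getElem?_eq_star_iff (hw : IsDyckWord n w) {v : List (Bool × Bool)}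
    (h : columns w = v ++ [(true, true)]) (k : ℕ) :
    v[k]? = some (true, true) ↔
      k + 1 ∈ Finset.Icc 1 (n - 1) ∧ 0 < rStat w (k + 1) ∧ 0 < sStat w (k + 1) := by
  have hlen := hw.length_columns
  rw [h, List.length_append, List.length_singleton] at hlen
  have hmem : k + 1 ∈ Finset.Icc 1 (n - 1) ↔ k < v.length := by
    rw [Finset.mem_Icc]
    omega
  rw [hmem]
  by_cases hk : k < v.length
  · have hsplit : columns w = v.take k ++ v[k] :: (v.drop (k + 1) ++ [(true, true)]) := by
      rw [h, ← List.cons_append, ← List.drop_eq_getElem_cons hk, ← List.append_assoc,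
        List.take_append_drop]
    have hr := hw.rStat_pos_iff hsplit (by simp)
    have hs := hw.sStat_pos_iff hsplit (by simp)
    rw [List.length_take_of_le hk.le] at hr hs
    rw [hr, hs, List.getElem?_eq_getElem hk, Option.some.injEq, Prod.ext_iff]
    exact (and_iff_right hk).symm
  · simp [hk]

lemma IsDyckWord.twoStars_succ_iff (hw : IsDyckWord n w) {v : List (Bool × Bool)}
    (h : columns w = v ++ [(true, true)]) (i j : ℕ) :
    twoStars n w (i + 1) (j + 1) ↔ i < j ∧ ∀ k, v[k]? = some (true, true) ↔ k = i ∨ k = j := by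
  simp only [hw.getElem?_eq_star_iff h, twoStars]
  constructor
  · rintro ⟨hi, hj, hij, hri, hrj, honly⟩
    refine ⟨by omega, fun k => ⟨fun hk => ?_, ?_⟩⟩
    · simpa using honly _ hk.1 hk.2
    · rintro (rfl | rfl)
      exacts [⟨hi, hri⟩, ⟨hj, hrj⟩]
  · rintro ⟨hij, hall⟩
    obtain ⟨hi, hri⟩ := (hall i).2 (.inl rfl)
    obtain ⟨hj, hrj⟩ := (hall j).2 (.inr rfl)
    refine ⟨hi, hj, by omega, hri, hrj, fun k hk hrk => ?_⟩
    obtain ⟨k, rfl⟩ := Nat.exists_eq_add_of_le' (Finset.mem_Icc.1 hk).1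
    simpa using (hall k).1 ⟨hk, hrk⟩

end TwoStars

section StarWords

/-- The column encoding a Motzkin step. -/
def stepColumn : Option Bool → Bool × Bool
  | none => (false, false)
  | some true => (false, true)
  | some false => (true, false)

lemma stepColumn_injective : Function.Injective stepColumn := by
  rintro (_ | _ | _) (_ | _ | _) h <;> simp_all [stepColumn]

lemma range_stepColumn : Set.range stepColumn = {(true, true)}ᶜ := by
  ext ⟨_ | _, _ | _⟩ <;> simp [Option.exists, stepColumn]

lemma star_notMem_iff_exists_map_stepColumn_eq {c : List (Bool × Bool)} :
    (true, true) ∉ c ↔ ∃ l : List (Option Bool), l.map stepColumn = c := by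
  have h := Set.ext_iff.1 (Set.range_list_map stepColumn) c
  rw [range_stepColumn] at h
  refine Iff.trans ?_ h.symm
  exact ⟨fun hc a ha ha' => hc (ha' ▸ ha), fun hc hstar => hc _ hstar rfl⟩

lemma fst_comp_stepColumn : Prod.fst ∘ stepColumn = (· == some false) := by
  funext s
  rcases s with _ | _ | _ <;> rfl

lemma snd_comp_stepColumn : Prod.snd ∘ stepColumn = (· == some true) := by
  funext s
  rcases s with _ | _ | _ <;> rfl

lemma countP_fst_map_stepColumn (l : List (Option Bool)) :
    (l.map stepColumn).countP Prod.fst = l.count (some false) := by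
  rw [List.countP_map, fst_comp_stepColumn]
  rfl

lemma countP_snd_map_stepColumn (l : List (Option Bool)) :
    (l.map stepColumn).countP Prod.snd = l.count (some true) := by
  rw [List.countP_map, snd_comp_stepColumn]
  rfl

/-- The word on `Bool × Bool` with three letters `(true, true)`, the last one at its end, and
with the Motzkin steps `P`, `M`, `Q` before the first, between the first two, and between the last
two of them. -/
def starWord (P M Q : List (Option Bool)) : List (Bool × Bool) :=
  P.map stepColumn ++ (true, true) ::
    (M.map stepColumn ++ (true, true) :: (Q.map stepColumn ++ [(true, true)]))

variable {n : ℕ} {w : List Bool} {P M Q : List (Option Bool)}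

lemma starWord_eq_append (P M Q : List (Option Bool)) : starWord P M Q =
    (P.map stepColumn ++ (true, true) :: M.map stepColumn) ++
      (true, true) :: (Q.map stepColumn ++ [(true, true)]) := by
  simp [starWord]

lemma starWord_inj {P' M' Q' : List (Option Bool)} (h : starWord P M Q = starWord P' M' Q') :
    P = P' ∧ M = M' ∧ Q = Q' := by
  have hinj := List.map_injective_iff.2 stepColumn_injective
  have hcount (l : List (Option Bool)) : (l.map stepColumn).countP (· == (true, true)) = 0 :=
    List.count_eq_zero.2 (star_notMem_iff_exists_map_stepColumn_eq.2 ⟨l, rfl⟩)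
  obtain ⟨hP, -, h⟩ := append_cons_inj_of_countP_eq (f := (· == (true, true))) rfl rfl
    (by rw [hcount, hcount]) h
  obtain ⟨hM, -, h⟩ := append_cons_inj_of_countP_eq (f := (· == (true, true))) rfl rfl
    (by rw [hcount, hcount]) h
  exact ⟨hinj hP, hinj hM, hinj (List.append_cancel_right h)⟩

lemma IsDyckWord.twoStars_iff (hw : IsDyckWord n w) (hn : 0 < n) (k₁ k₂ : ℕ) :
    twoStars n w k₁ k₂ ↔ ∃ P M Q, columns w = starWord P M Q ∧
      k₁ = P.length + 1 ∧ k₂ = P.length + M.length + 2 := by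
  obtain ⟨c, hc⟩ := hw.exists_columns_eq_append hn
  constructor
  · intro h
    obtain ⟨i, rfl⟩ := Nat.exists_eq_add_of_le' (Finset.mem_Icc.1 h.1).1
    obtain ⟨j, rfl⟩ := Nat.exists_eq_add_of_le' (Finset.mem_Icc.1 h.2.1).1
    rw [hw.twoStars_succ_iff hc, forall_getElem?_eq_some_iff_eq_or_eq] at h
    obtain ⟨p, m, q, rfl, hp, hm, hq, rfl, rfl⟩ := h
    obtain ⟨P, rfl⟩ := star_notMem_iff_exists_map_stepColumn_eq.1 hp
    obtain ⟨M, rfl⟩ := star_notMem_iff_exists_map_stepColumn_eq.1 hm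
    obtain ⟨Q, rfl⟩ := star_notMem_iff_exists_map_stepColumn_eq.1 hq
    exact ⟨P, M, Q, by simp [hc, starWord], by simp, by simp⟩
  · rintro ⟨P, M, Q, h, rfl, rfl⟩
    have hstar (l : List (Option Bool)) : (true, true) ∉ l.map stepColumn :=
      star_notMem_iff_exists_map_stepColumn_eq.2 ⟨l, rfl⟩
    have hcP : c = P.map stepColumn ++ (true, true) ::
        (M.map stepColumn ++ (true, true) :: Q.map stepColumn) :=
      List.append_cancel_right (hc.symm.trans (by simp [h, starWord]))
    exact (hw.twoStars_succ_iff hc P.length (P.length + M.length + 1)).2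
      (forall_getElem?_eq_some_iff_eq_or_eq.2 ⟨P.map stepColumn, M.map stepColumn,
        Q.map stepColumn, hcP, hstar P, hstar M, hstar Q, by simp, by simp⟩)

lemma IsDyckWord.xStat_of_columns_eq_starWord (hw : IsDyckWord n w)
    (h : columns w = starWord P M Q) : xStat w (P.length + 1) = P.count (some true) := by
  have hx := hw.xStat_eq_countP h (by simp)
  rw [List.length_map] at hx
  exact hx.trans (List.count_map_of_injective P stepColumn stepColumn_injective (some true))

lemma IsDyckWord.yStat_of_columns_eq_starWord (hw : IsDyckWord n w)
    (h : columns w = starWord P M Q) :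
    yStat w (P.length + M.length + 2) = P.count (some false) + M.count (some false) := by
  have hy := hw.yStat_eq_countP (h.trans (starWord_eq_append P M Q)) (by simp)
  have hcount (l : List (Option Bool)) :
      (l.map stepColumn).countP (· == (true, false)) = l.count (some false) :=
    List.count_map_of_injective l stepColumn stepColumn_injective (some false)
  simpa [hcount, ← Nat.add_assoc] using hy

lemma IsDyckWord.rStat_sStat_eq_one_left_iff (hw : IsDyckWord n w)
    (h : columns w = starWord P M Q) :
    (rStat w (P.length + 1) = 1 ∧ sStat w (P.length + 1) = 1) ↔
      Repeats Prod.snd (P.count (some false)) (starWord P M Q) ∧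
        Repeats Prod.fst (P.count (some true) + 1) (starWord P M Q) := by
  have hr := hw.rStat_eq_one_iff h (by simp) rfl
  have hs := hw.sStat_eq_one_iff h (by simp) rfl
  rw [List.length_map, countP_fst_map_stepColumn, h] at hr
  rw [List.length_map, countP_snd_map_stepColumn, h] at hs
  rw [hr, hs]

lemma IsDyckWord.rStat_sStat_eq_one_right_iff (hw : IsDyckWord n w)
    (h : columns w = starWord P M Q) :
    (rStat w (P.length + M.length + 2) = 1 ∧ sStat w (P.length + M.length + 2) = 1) ↔
      Repeats Prod.snd (P.count (some false) + M.count (some false) + 1) (starWord P M Q) ∧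
        Repeats Prod.fst (P.count (some true) + M.count (some true) + 2) (starWord P M Q) := by
  have h' := h.trans (starWord_eq_append P M Q)
  have hr := hw.rStat_eq_one_iff h' (by simp) rfl
  have hs := hw.sStat_eq_one_iff h' (by simp) rfl
  simp only [h, List.length_append, List.length_cons, List.length_map, List.countP_append,
    List.countP_cons, countP_fst_map_stepColumn, countP_snd_map_stepColumn, if_true,
    ← Nat.add_assoc] at hr hs
  rw [hr, hs]

/-- The conditions `x₁ = y₂` and `L = 4` on a Dyck path with columns `starWord P M Q`. The first
conjunct is `x₁ = y₂`; the others are `r = 1` and `s = 1` at `k₁` and `k₂`, simplified by means of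
the first. -/
def IsHatTriple (P M Q : List (Option Bool)) : Prop :=
  P.count (some true) = P.count (some false) + M.count (some false) ∧
    Repeats Prod.snd (P.count (some false)) (starWord P M Q) ∧
    EndsIn (· == some false) M ∧ (∀ a ∈ M.head?, a = some true) ∧
    Repeats Prod.fst (M.count (some true)) (Q.map stepColumn ++ [(true, true)])

lemma repeats_fst_starWord_left_iff
    (h : P.count (some true) = P.count (some false) + M.count (some false)) :
    Repeats Prod.fst (P.count (some true) + 1) (starWord P M Q) ↔ EndsIn (· == some false) M := by
  have hcount : (P.map stepColumn ++ (true, true) :: M.map stepColumn).countP Prod.fst =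
      P.count (some true) + 1 := by
    simp only [List.countP_append, List.countP_cons, countP_fst_map_stepColumn, if_true]
    omega
  rw [starWord_eq_append, ← hcount, repeats_append_cons_iff rfl, List.append_cons,
    (endsIn_append_singleton.2 rfl).append, endsIn_map, fst_comp_stepColumn]

lemma repeats_snd_starWord_right_iff
    (h : P.count (some true) = P.count (some false) + M.count (some false)) :
    Repeats Prod.snd (P.count (some false) + M.count (some false) + 1) (starWord P M Q) ↔
      ∀ a ∈ M.head?, a = some true := by
  have hcount : (P.map stepColumn ++ [(true, true)]).countP Prod.snd =
      P.count (some false) + M.count (some false) + 1 := by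
    simp only [List.countP_append, List.countP_cons, List.countP_nil, countP_snd_map_stepColumn,
      if_true]
    omega
  rw [starWord, List.append_cons, ← hcount, ← Nat.add_zero (List.countP _ _),
    (endsIn_append_singleton.2 rfl).repeats_append_iff]
  rcases M with _ | ⟨_ | _ | _, M⟩ <;> simp [repeats_zero_cons_iff, stepColumn]

lemma repeats_fst_starWord_right_iff
    (h : P.count (some true) = P.count (some false) + M.count (some false)) :
    Repeats Prod.fst (P.count (some true) + M.count (some true) + 2) (starWord P M Q) ↔
      Repeats Prod.fst (M.count (some true)) (Q.map stepColumn ++ [(true, true)]) := by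
  have hcount : (P.map stepColumn ++ (true, true) :: M.map stepColumn ++
      [(true, true)]).countP Prod.fst + M.count (some true) =
        P.count (some true) + M.count (some true) + 2 := by
    simp only [List.countP_append, List.countP_cons, List.countP_nil, countP_fst_map_stepColumn,
      if_true]
    omega
  rw [starWord_eq_append, List.append_cons, ← hcount,
    (endsIn_append_singleton.2 rfl).repeats_append_iff]

lemma IsDyckWord.LStat_eq_four_and_xStat_eq_yStat_iff (hw : IsDyckWord n w) (hn : 0 < n) :
    (LStat n w = 4 ∧ ∃ k₁ k₂, twoStars n w k₁ k₂ ∧ xStat w k₁ = yStat w k₂) ↔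
      ∃ P M Q, columns w = starWord P M Q ∧ IsHatTriple P M Q := by
  have htriple {P M Q} (h : columns w = starWord P M Q) :
      twoStars n w (P.length + 1) (P.length + M.length + 2) ∧ ((LStat n w = 4 ∧
        xStat w (P.length + 1) = yStat w (P.length + M.length + 2)) ↔ IsHatTriple P M Q) := by
    have hstars := (hw.twoStars_iff hn _ _).2 ⟨P, M, Q, h, rfl, rfl⟩
    refine ⟨hstars, ?_⟩
    rw [LStat_eq_four_iff hstars, hw.rStat_sStat_eq_one_left_iff h,
      hw.rStat_sStat_eq_one_right_iff h, hw.xStat_of_columns_eq_starWord h,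
      hw.yStat_of_columns_eq_starWord h, and_comm, IsHatTriple]
    refine and_congr_right fun heq => ?_
    rw [repeats_fst_starWord_left_iff heq, repeats_snd_starWord_right_iff heq,
      repeats_fst_starWord_right_iff heq, and_assoc]
  constructor
  · rintro ⟨hL, k₁, k₂, hstars, hxy⟩
    obtain ⟨P, M, Q, h, rfl, rfl⟩ := (hw.twoStars_iff hn _ _).1 hstars
    exact ⟨P, M, Q, h, (htriple h).2.1 ⟨hL, hxy⟩⟩
  · rintro ⟨P, M, Q, h, hPMQ⟩
    obtain ⟨hL, hxy⟩ := (htriple h).2.2 hPMQ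
    exact ⟨hL, _, _, (htriple h).1, hxy⟩

lemma isColumnWord_starWord_iff : IsColumnWord n (starWord P M Q) ↔
    P.length + M.length + Q.length + 3 = n ∧ IsMotzkinWord (P ++ M ++ Q) := by
  have hfst : EndsIn Prod.fst (starWord P M Q) := by
    simp only [starWord_eq_append, ← List.cons_append, ← List.append_assoc,
      endsIn_append_singleton]
  have hsnd : EndsIn Prod.snd (starWord P M Q) := by
    simp only [starWord_eq_append, ← List.cons_append, ← List.append_assoc,
      endsIn_append_singleton]
  rw [IsColumnWord, and_iff_right hfst, and_iff_right hsnd]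
  simp only [IsMotzkinWord, starWord, forall_prefix_append_iff,
    forall_prefix_cons_iff, forall_prefix_map_iff, forall_prefix_nil_iff, List.countP_append,
    List.countP_cons, List.countP_nil, countP_fst_map_stepColumn, countP_snd_map_stepColumn,
    List.count_append, List.length_append, List.length_cons, List.length_map, List.length_nil,
    if_true]
  constructor
  · rintro ⟨hlen, hcount, hP, -, hM, -, hQ, -, -⟩
    exact ⟨by omega, by omega, ⟨hP, fun p hp => by have := hM p hp; omega⟩,
      fun p hp => by have := hQ p hp; omega⟩
  · rintro ⟨hlen, hcount, ⟨hP, hM⟩, hQ⟩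
    have hP' := hP P List.prefix_rfl
    have hM' := hM M List.prefix_rfl
    exact ⟨by omega, by omega, hP, by omega, fun p hp => by have := hM p hp; omega, by omega,
      fun p hp => by have := hQ p hp; omega, by omega, by omega⟩

end StarWords

section SpecialPrefixes

/-- Motzkin paths that may end at any height. -/
def IsMotzkinPrefix (l : List (Option Bool)) : Prop :=
  ∀ p, p <+: l → p.count (some false) ≤ p.count (some true)

/-- The path read backwards, so that its up and down steps are exchanged. -/
def flipRev (l : List (Option Bool)) : List (Option Bool) := l.reverse.map (Option.map not)

lemma flipRev_flipRev (l : List (Option Bool)) : flipRev (flipRev l) = l := by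
  simp [flipRev, Function.comp_def]

lemma flipRev_append (l r : List (Option Bool)) : flipRev (l ++ r) = flipRev r ++ flipRev l := by
  simp [flipRev]

lemma length_flipRev (l : List (Option Bool)) : (flipRev l).length = l.length := by
  simp [flipRev]

lemma count_flipRev (l : List (Option Bool)) (b : Bool) :
    (flipRev l).count (some b) = l.count (some !b) := by
  have hinj : Function.Injective (Option.map not) :=
    Option.map_injective Bool.involutive_not.injective
  rw [flipRev, ← Bool.not_not b, ← Option.map_some, List.count_map_of_injective _ _ hinj,
    List.count_reverse, Bool.not_not]

lemma isMotzkinPrefix_flipRev_iff {l : List (Option Bool)} :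
    IsMotzkinPrefix (flipRev l) ↔ ∀ p, p <+: l →
      l.count (some true) + p.count (some false) ≤ l.count (some false) + p.count (some true) := by
  constructor
  · rintro h p ⟨s, rfl⟩
    have := h (flipRev s) ⟨flipRev p, (flipRev_append p s).symm⟩
    simp only [count_flipRev, Bool.not_true, Bool.not_false, List.count_append] at this ⊢
    omega
  · rintro h p ⟨s, hs⟩
    obtain rfl : flipRev s ++ flipRev p = l := by rw [← flipRev_append, hs, flipRev_flipRev]
    have := h (flipRev s) (List.prefix_append _ _)
    simp only [count_flipRev, Bool.not_true, Bool.not_false, List.count_append] at this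
    omega

lemma isMotzkinWord_append_append_iff {P M Q : List (Option Bool)}
    (h : P.count (some true) = P.count (some false) + M.count (some false)) :
    IsMotzkinWord (P ++ M ++ Q) ↔ Q.count (some false) = Q.count (some true) + M.count (some true) ∧
      IsMotzkinPrefix P ∧ IsMotzkinPrefix (flipRev Q) := by
  rw [isMotzkinPrefix_flipRev_iff, IsMotzkinWord]
  simp only [forall_prefix_append_iff, List.count_append]
  constructor
  · rintro ⟨hcount, ⟨hP, -⟩, hQ⟩
    exact ⟨by omega, hP, fun q hq => by have := hQ q hq; omega⟩
  · rintro ⟨hcount, hP, hQ⟩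
    refine ⟨by omega, ⟨hP, fun m hm => ?_⟩, fun q hq => by have := hQ q hq; omega⟩
    have := hm.sublist.count_le (some false)
    omega

/-- Motzkin prefixes ending at height `a + 1` in which, with `d` the number of down steps,
the `d`-th up step (the beginning of the path if `d = 0`) is followed by an up step. -/
def IsSpecialPrefix (a : ℕ) (l : List (Option Bool)) : Prop :=
  IsMotzkinPrefix l ∧ l.count (some true) = l.count (some false) + a + 1 ∧
    Repeats (· == some true) (l.count (some false)) l

variable {n : ℕ} {P M Q : List (Option Bool)}

lemma repeats_snd_starWord_left_iff (h : P.count (some false) < P.count (some true)) :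
    Repeats Prod.snd (P.count (some false)) (starWord P M Q) ↔
      Repeats (· == some true) (P.count (some false)) P := by
  rw [starWord, repeats_append_iff_of_lt (by rwa [countP_snd_map_stepColumn]), repeats_map,
    snd_comp_stepColumn]

lemma repeats_fst_append_star_iff {t : ℕ} (ht : 0 < t)
    (h : Q.count (some false) = Q.count (some true) + t) :
    Repeats Prod.fst t (Q.map stepColumn ++ [(true, true)]) ↔
      Repeats (· == some true) ((flipRev Q).count (some false)) (flipRev Q) := by
  have hflip : ((· == some true) ∘ Option.map not : Option Bool → Bool) = (· == some false) := by
    funext s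
    rcases s with _ | _ | _ <;> rfl
  have hcount : (Q.map stepColumn).reverse.countP Prod.fst = t + Q.count (some true) := by
    rw [List.countP_reverse, countP_fst_map_stepColumn, h, Nat.add_comm]
  rw [← List.reverse_reverse (Q.map stepColumn), repeats_reverse_append_singleton_iff rfl ht hcount,
    ← List.map_reverse, repeats_map, fst_comp_stepColumn, count_flipRev, Bool.not_false, flipRev,
    repeats_map, hflip]

lemma IsHatTriple.eq_nil (h : IsHatTriple P [] Q) (hPQ : IsMotzkinWord (P ++ [] ++ Q)) :
    P = [] ∧ Q = [] := by
  obtain ⟨hcount, hP, -, -, hQ⟩ := h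
  obtain ⟨-, hprefix⟩ := hPQ
  rw [List.count_nil, Nat.add_zero] at hcount
  constructor
  · rw [starWord, ← hcount, ← countP_snd_map_stepColumn, repeats_append_cons_iff rfl, endsIn_map,
      snd_comp_stepColumn] at hP
    rcases P.eq_nil_or_concat' with rfl | ⟨p, a, rfl⟩
    · rfl
    obtain rfl : a = some true := by simpa using endsIn_append_singleton.1 hP
    have := hprefix p ⟨some true :: Q, by simp⟩
    simp only [List.count_append, List.count_singleton, beq_iff_eq, Option.some.injEq,
      Bool.true_eq_false, if_false, if_true] at hcount
    omega
  · rcases Q with _ | ⟨a, q⟩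
    · rfl
    obtain rfl : a = some false := by
      rw [List.count_nil, List.map_cons, List.cons_append, repeats_zero_cons_iff] at hQ
      exact beq_iff_eq.1 ((congrFun fst_comp_stepColumn a).symm.trans hQ)
    have := hprefix (P ++ [some false]) ⟨q, by simp⟩
    simp only [List.count_append, List.count_singleton, beq_iff_eq, Option.some.injEq,
      Bool.false_eq_true, if_false, if_true] at this
    omega

lemma IsHatTriple.eq_nil_or_exists (h : IsHatTriple P M Q) :
    M = [] ∨ ∃ w, M = some true :: (w ++ [some false]) := by
  obtain ⟨-, -, hend, hhead, -⟩ := h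
  rcases M with _ | ⟨a, M⟩
  · exact .inl rfl
  obtain rfl : a = some true := hhead a rfl
  rcases M.eq_nil_or_concat' with rfl | ⟨w, b, rfl⟩
  · simp [EndsIn] at hend
  · rw [← List.cons_append, endsIn_append_singleton, beq_iff_eq] at hend
    exact .inr ⟨w, by rw [hend]⟩

lemma isColumnWord_and_isHatTriple_iff {w : List (Option Bool)} :
    (IsColumnWord n (starWord P (some true :: (w ++ [some false])) Q) ∧
      IsHatTriple P (some true :: (w ++ [some false])) Q) ↔
    P.length + w.length + Q.length + 5 = n ∧ IsSpecialPrefix (w.count (some false)) P ∧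
      IsSpecialPrefix (w.count (some true)) (flipRev Q) := by
  have hends : EndsIn (· == some false) (some true :: (w ++ [some false])) :=
    endsIn_append_singleton (l := some true :: w).2 rfl
  have htrue : (some true :: (w ++ [some false])).count (some true) = w.count (some true) + 1 := by
    simp
  have hfalse : (some true :: (w ++ [some false])).count (some false) =
      w.count (some false) + 1 := by
    simp
  have hlen : (some true :: (w ++ [some false])).length = w.length + 2 := by simp
  rw [isColumnWord_starWord_iff, IsHatTriple, and_iff_right hends]
  set M := some true :: (w ++ [some false]) with hM
  constructor
  · rintro ⟨⟨hn, hword⟩, hcount, hP, -, hQ⟩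
    obtain ⟨hcountQ, hprefixP, hprefixQ⟩ := (isMotzkinWord_append_append_iff hcount).1 hword
    rw [repeats_snd_starWord_left_iff (by omega)] at hP
    rw [repeats_fst_append_star_iff (by omega) hcountQ] at hQ
    exact ⟨by omega, ⟨hprefixP, by omega, hP⟩, hprefixQ,
      by rw [count_flipRev, count_flipRev, Bool.not_true, Bool.not_false]; omega, hQ⟩
  · rintro ⟨hn, ⟨hprefixP, hcountP, hP⟩, hprefixQ, hcountQ, hQ⟩
    rw [count_flipRev, count_flipRev, Bool.not_true, Bool.not_false] at hcountQ
    have hcount : P.count (some true) = P.count (some false) + M.count (some false) := by omega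
    have hcount' : Q.count (some false) = Q.count (some true) + M.count (some true) := by omega
    refine ⟨⟨by omega, (isMotzkinWord_append_append_iff hcount).2 ⟨hcount', hprefixP, hprefixQ⟩⟩,
      hcount, (repeats_snd_starWord_left_iff (by omega)).2 hP, by simp [hM],
      (repeats_fst_append_star_iff (by omega) hcount').2 hQ⟩

end SpecialPrefixes

section HatColumnWords

/-- The column words of the paths counted by the theorem. -/
def hatColumnWords (n : ℕ) : Set (List (Bool × Bool)) :=
  {c | IsColumnWord n c ∧ ∃ P M Q, c = starWord P M Q ∧ IsHatTriple P M Q}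

/-- The triples `(P, w, flipRev Q)` parametrising, for `n > 3`, the words `starWord P M Q` in
`hatColumnWords n`, where `w` is `M` without its first and last steps. -/
def specialTriples (n : ℕ) : Set (List (Option Bool) × List (Option Bool) × List (Option Bool)) :=
  {t | t.1.length + t.2.1.length + t.2.2.length + 5 = n ∧
    IsSpecialPrefix (t.2.1.count (some false)) t.1 ∧
    IsSpecialPrefix (t.2.1.count (some true)) t.2.2}

lemma ncard_dyckHat {n : ℕ} (hn : 0 < n) :
    {w | IsDyckWord n w ∧ LStat n w = 4 ∧ ∃ k₁ k₂, twoStars n w k₁ k₂ ∧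
      xStat w k₁ = yStat w k₂}.ncard = (hatColumnWords n).ncard := by
  obtain ⟨hmaps, hinj, hsurj⟩ := columns_bijOn hn
  refine Set.ncard_congr (fun w _ => columns w) ?_ ?_ ?_
  · rintro w ⟨hw, h⟩
    exact ⟨hmaps hw, (hw.LStat_eq_four_and_xStat_eq_yStat_iff hn).1 h⟩
  · exact fun w w' h h' => hinj h.1 h'.1
  · rintro c ⟨hc, h⟩
    obtain ⟨w, hw, rfl⟩ := hsurj hc
    exact ⟨w, ⟨hw, (hw.LStat_eq_four_and_xStat_eq_yStat_iff hn).2 h⟩, rfl⟩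

lemma hatColumnWords_three : hatColumnWords 3 = {starWord [] [] []} := by
  refine Set.eq_singleton_iff_unique_mem.2 ⟨⟨?_, [], [], [], rfl, ?_⟩, ?_⟩
  · simp [isColumnWord_starWord_iff, IsMotzkinWord]
  · simp [IsHatTriple, starWord, repeats_zero_cons_iff, endsIn_nil]
  · rintro c ⟨hc, P, M, Q, rfl, -⟩
    obtain ⟨hlen, -⟩ := isColumnWord_starWord_iff.1 hc
    obtain rfl : P = [] := List.eq_nil_of_length_eq_zero (by omega)
    obtain rfl : M = [] := List.eq_nil_of_length_eq_zero (by omega)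
    obtain rfl : Q = [] := List.eq_nil_of_length_eq_zero (by omega)
    rfl

lemma ncard_hatColumnWords {n : ℕ} (hn : 3 < n) :
    (hatColumnWords n).ncard = (specialTriples n).ncard := by
  symm
  refine Set.ncard_congr
    (fun t _ => starWord t.1 (some true :: (t.2.1 ++ [some false])) (flipRev t.2.2)) ?_ ?_ ?_
  · rintro ⟨P, w, Q⟩ ⟨hlen, hP, hQ⟩
    obtain ⟨hc, h⟩ := isColumnWord_and_isHatTriple_iff.2
      ⟨(length_flipRev Q).symm ▸ hlen, hP, (flipRev_flipRev Q).symm ▸ hQ⟩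
    exact ⟨hc, _, _, _, rfl, h⟩
  · rintro ⟨P, w, Q⟩ ⟨P', w', Q'⟩ - - h
    obtain ⟨rfl, hw, hQ⟩ := starWord_inj h
    obtain rfl : w = w' := List.append_cancel_right (List.cons.inj hw).2
    obtain rfl : Q = Q' := by simpa only [flipRev_flipRev] using congrArg flipRev hQ
    rfl
  · rintro c ⟨hc, P, M, Q, rfl, h⟩
    rcases h.eq_nil_or_exists with rfl | ⟨w, rfl⟩
    · obtain ⟨hlen, hword⟩ := isColumnWord_starWord_iff.1 hc
      obtain ⟨rfl, rfl⟩ := h.eq_nil hword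
      exact absurd hlen hn.ne
    · obtain ⟨hlen, hP, hQ⟩ := isColumnWord_and_isHatTriple_iff.1 ⟨hc, h⟩
      exact ⟨(P, w, flipRev Q), ⟨(length_flipRev Q).symm ▸ hlen, hP, hQ⟩,
        by simp only [flipRev_flipRev]⟩

end HatColumnWords

section Deletion

/-- Motzkin prefixes ending at height `a`. -/
def IsBallot (a : ℕ) (l : List (Option Bool)) : Prop :=
  IsMotzkinPrefix l ∧ l.count (some true) = l.count (some false) + a

/-- Insert an up step immediately after the `d`-th up step, where `d` is the number of down
steps (at the beginning of the path if `d = 0`). -/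
def insertUp (l : List (Option Bool)) : List (Option Bool) :=
  insertAfter (· == some true) (some true) (l.count (some false)) l

lemma isMotzkinPrefix_append_true_cons_iff {p q : List (Option Bool)}
    (h : (p ++ q).count (some false) ≤ p.count (some true)) :
    IsMotzkinPrefix (p ++ some true :: q) ↔ IsMotzkinPrefix (p ++ q) := by
  have hq (r) (hr : r <+: q) : p.count (some false) + r.count (some false) ≤
      p.count (some true) := by
    have := hr.sublist.count_le (some false)
    rw [List.count_append] at h
    omega
  have hnil := hq [] List.nil_prefix
  rw [IsMotzkinPrefix, IsMotzkinPrefix, forall_prefix_append_iff, forall_prefix_append_iff,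
    forall_prefix_cons_iff]
  refine and_congr_right fun _ => iff_of_true ⟨by simpa using hnil, fun r hr => ?_⟩ fun r hr => ?_
  all_goals
    have := hq r hr
    simp only [List.count_append, List.count_cons, beq_iff_eq, Option.some.injEq,
      Bool.true_eq_false, if_false, if_true]
    omega

lemma isSpecialPrefix_iff {a : ℕ} {l : List (Option Bool)} :
    IsSpecialPrefix a l ↔ ∃ p q, l = p ++ some true :: q ∧ EndsIn (· == some true) p ∧
      p.count (some true) = (p ++ q).count (some false) ∧ IsBallot a (p ++ q) := by
  constructor
  · rintro ⟨hprefix, hcount, p, b, q, rfl, hb, hp, he⟩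
    obtain rfl : b = some true := beq_iff_eq.1 hb
    have hp' : p.count (some true) = (p ++ q).count (some false) := by
      simpa [List.count] using hp
    refine ⟨p, q, rfl, he, hp', (isMotzkinPrefix_append_true_cons_iff hp'.ge).1 hprefix, ?_⟩
    simp only [List.count_append, List.count_cons, beq_iff_eq, Option.some.injEq,
      Bool.true_eq_false, if_false, if_true] at hcount ⊢
    omega
  · rintro ⟨p, q, rfl, he, hp, hprefix, hcount⟩
    refine ⟨(isMotzkinPrefix_append_true_cons_iff hp.ge).2 hprefix, ?_, p, some true, q, rfl, rfl,
      ?_, he⟩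
    · simp only [List.count_append, List.count_cons, beq_iff_eq, Option.some.injEq,
        Bool.true_eq_false, if_false, if_true] at hcount ⊢
      omega
    · simpa [List.count] using hp

lemma exists_insertUp_eq_append {l : List (Option Bool)}
    (h : l.count (some false) ≤ l.count (some true)) :
    ∃ p q, l = p ++ q ∧ insertUp l = p ++ some true :: q ∧ EndsIn (· == some true) p ∧
      p.count (some true) = (p ++ q).count (some false) := by
  obtain ⟨p, q, rfl, hins, he, hp⟩ := exists_insertAfter_eq_append h (some true)
  exact ⟨p, q, rfl, hins, he, hp⟩

lemma insertUp_bijOn (a : ℕ) :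
    Set.BijOn insertUp {l | IsBallot a l} {l | IsSpecialPrefix a l} := by
  have hle {l} (h : IsBallot a l) : l.count (some false) ≤ l.count (some true) :=
    h.1 l List.prefix_rfl
  have hcount {l} (h : IsBallot a l) : (insertUp l).count (some false) = l.count (some false) := by
    obtain ⟨p, q, rfl, hins, -⟩ := exists_insertUp_eq_append (hle h)
    simp [hins]
  refine ⟨fun l hl => ?_, fun l hl l' hl' h => ?_, fun l hl => ?_⟩
  · obtain ⟨p, q, rfl, hins, he, hp⟩ := exists_insertUp_eq_append (hle hl)
    exact isSpecialPrefix_iff.2 ⟨p, q, hins, he, hp, hl⟩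
  · have heq : l.count (some false) = l'.count (some false) := by
      rw [← hcount hl, h, hcount hl']
    refine insertAfter_injOn rfl _ (hle hl) (heq.trans_le (hle hl')) (h.trans ?_)
    rw [insertUp, heq]
  · obtain ⟨p, q, rfl, he, hp, hpq⟩ := isSpecialPrefix_iff.1 hl
    exact ⟨p ++ q, hpq, by rw [insertUp, ← hp]; exact he.insertAfter_append _ q⟩

lemma IsBallot.length_insertUp {a : ℕ} {l : List (Option Bool)} (h : IsBallot a l) :
    (insertUp l).length = l.length + 1 := by
  obtain ⟨p, q, rfl, hins, -⟩ := exists_insertUp_eq_append (h.1 l List.prefix_rfl)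
  simp only [hins, List.length_append, List.length_cons, Nat.add_assoc]

/-- The triples obtained from `specialTriples (m + 7)` by deleting an up step from the outer
words. -/
def ballotTriples (m : ℕ) : Set (List (Option Bool) × List (Option Bool) × List (Option Bool)) :=
  {t | t.1.length + t.2.1.length + t.2.2.length = m ∧
    IsBallot (t.2.1.count (some false)) t.1 ∧ IsBallot (t.2.1.count (some true)) t.2.2}

lemma ncard_specialTriples (m : ℕ) : (specialTriples (m + 7)).ncard = (ballotTriples m).ncard := by
  have hlen {p q a b} {w : List (Option Bool)} (hp : IsBallot a p) (hq : IsBallot b q) :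
      (insertUp p).length + w.length + (insertUp q).length + 5 = m + 7 ↔
        p.length + w.length + q.length = m := by
    rw [hp.length_insertUp, hq.length_insertUp]
    omega
  symm
  refine Set.ncard_congr (fun t _ => (insertUp t.1, t.2.1, insertUp t.2.2)) ?_ ?_ ?_
  · rintro ⟨p, w, q⟩ ⟨hm, hp, hq⟩
    exact ⟨(hlen hp hq).2 hm, (insertUp_bijOn _).mapsTo hp, (insertUp_bijOn _).mapsTo hq⟩
  · rintro ⟨p, w, q⟩ ⟨p', w', q'⟩ ⟨-, hp, hq⟩ ⟨-, hp', hq'⟩ h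
    simp only [Prod.mk.injEq] at h
    obtain ⟨hpp', rfl, hqq'⟩ := h
    obtain rfl : p = p' := (insertUp_bijOn _).injOn hp hp' hpp'
    obtain rfl : q = q' := (insertUp_bijOn _).injOn hq hq' hqq'
    rfl
  · rintro ⟨P, w, Q⟩ ⟨hm, hP, hQ⟩
    obtain ⟨p, hp, rfl⟩ := (insertUp_bijOn _).surjOn hP
    obtain ⟨q, hq, rfl⟩ := (insertUp_bijOn _).surjOn hQ
    exact ⟨(p, w, q), ⟨(hlen hp hq).1 hm, hp, hq⟩, rfl⟩

end Deletion

section GeneratingFunctions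

open PowerSeries Finset.HasAntidiagonal

lemma eq_zero_of_recurrence {R : Type*} [Semiring R] {E : ℕ → R⟦X⟧}
    (h₀ : E 0 = X * (E 0 + E 1)) (h : ∀ a, E (a + 1) = X * (E a + E (a + 1) + E (a + 2)))
    (a : ℕ) : E a = 0 := by
  have hcoeff (p) : ∀ a, coeff p (E a) = 0 := by
    induction p with
    | zero =>
      rintro (_ | a)
      · rw [h₀, coeff_zero_X_mul]
      · rw [h, coeff_zero_X_mul]
    | succ p ih =>
      rintro (_ | a)
      · rw [h₀, coeff_succ_X_mul, map_add, ih, ih, add_zero]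
      · rw [h, coeff_succ_X_mul, map_add, map_add, ih, ih, ih, add_zero, add_zero]
  ext p
  rw [hcoeff, map_zero]

/-- The words of length `l` on the alphabet of Motzkin steps. -/
def stepWords : ℕ → Finset (List (Option Bool))
  | 0 => {[]}
  | l + 1 => (stepWords l ×ˢ (Finset.univ : Finset (Option Bool))).image fun t => t.1 ++ [t.2]

lemma mem_stepWords {l : ℕ} {w : List (Option Bool)} : w ∈ stepWords l ↔ w.length = l := by
  induction l generalizing w with
  | zero => simp [stepWords]
  | succ l ih =>
    rcases w.eq_nil_or_concat' with rfl | ⟨v, s, rfl⟩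
    · simp [stepWords]
    · simp [stepWords, ih]

lemma sum_stepWords_succ {A : Type*} [AddCommMonoid A] (l : ℕ) (f : List (Option Bool) → A) :
    ∑ w ∈ stepWords (l + 1), f w =
      ∑ w ∈ stepWords l, (f (w ++ [none]) + f (w ++ [some true]) + f (w ++ [some false])) := by
  rw [stepWords, Finset.sum_image, Finset.sum_product]
  · refine Finset.sum_congr rfl fun w _ => ?_
    simp [Fintype.sum_option, add_assoc]
  · rintro ⟨v, s⟩ - ⟨v', s'⟩ - h
    simpa using h

section BallotWords

variable {a : ℕ} {w : List (Option Bool)}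

lemma isMotzkinPrefix_append_singleton_iff {s : Option Bool} :
    IsMotzkinPrefix (w ++ [s]) ↔ IsMotzkinPrefix w ∧
      (w ++ [s]).count (some false) ≤ (w ++ [s]).count (some true) := by
  rw [IsMotzkinPrefix, IsMotzkinPrefix, forall_prefix_append_iff, forall_prefix_cons_iff,
    forall_prefix_nil_iff, List.append_nil]
  exact ⟨fun h => ⟨h.1, h.2.2⟩, fun h => ⟨h.1, h.1 w List.prefix_rfl, h.2⟩⟩

lemma isBallot_append_none_iff : IsBallot a (w ++ [none]) ↔ IsBallot a w := by
  rw [IsBallot, IsBallot, isMotzkinPrefix_append_singleton_iff, and_assoc]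
  refine and_congr_right fun _ => ?_
  simp only [List.count_append, List.count_singleton, beq_iff_eq, reduceCtorEq, if_false]
  omega

lemma isBallot_append_false_iff : IsBallot a (w ++ [some false]) ↔ IsBallot (a + 1) w := by
  rw [IsBallot, IsBallot, isMotzkinPrefix_append_singleton_iff, and_assoc]
  refine and_congr_right fun _ => ?_
  simp only [List.count_append, List.count_singleton, beq_iff_eq, Option.some.injEq, reduceCtorEq,
    if_false, if_true]
  omega

lemma isBallot_succ_append_true_iff : IsBallot (a + 1) (w ++ [some true]) ↔ IsBallot a w := by
  rw [IsBallot, IsBallot, isMotzkinPrefix_append_singleton_iff, and_assoc]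
  refine and_congr_right fun _ => ?_
  simp only [List.count_append, List.count_singleton, beq_iff_eq, Option.some.injEq, reduceCtorEq,
    if_false, if_true]
  omega

lemma not_isBallot_zero_append_true : ¬ IsBallot 0 (w ++ [some true]) := by
  rintro ⟨hprefix, hcount⟩
  have := hprefix w (List.prefix_append _ _)
  simp only [List.count_append, List.count_singleton, beq_iff_eq, Option.some.injEq, reduceCtorEq,
    if_false, if_true] at hcount
  omega

lemma isBallot_nil_iff : IsBallot a [] ↔ a = 0 := by
  simp [IsBallot, IsMotzkinPrefix, eq_comm]

end BallotWords

open Classical in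
/-- The Motzkin prefixes of length `p` ending at height `a`. -/
noncomputable def ballotWords (a p : ℕ) : Finset (List (Option Bool)) :=
  (stepWords p).filter (IsBallot a)

lemma mem_ballotWords {a p : ℕ} {w : List (Option Bool)} :
    w ∈ ballotWords a p ↔ w.length = p ∧ IsBallot a w := by
  simp only [ballotWords, Finset.mem_filter, mem_stepWords]

lemma card_ballotWords_zero_left (p : ℕ) : (ballotWords 0 p).card = motzkin p := by
  rw [motzkin, ← Set.ncard_coe_finset]
  congr 1
  ext w
  rw [Finset.mem_coe, mem_ballotWords, IsBallot, Nat.add_zero, and_comm (a := IsMotzkinPrefix w),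
    eq_comm (a := w.count (some true))]
  rfl

open Classical in
lemma card_ballotWords_zero_right (a : ℕ) : (ballotWords a 0).card = if a = 0 then 1 else 0 := by
  simp only [ballotWords, Finset.card_filter, stepWords, Finset.sum_singleton, isBallot_nil_iff]

open Classical in
lemma card_ballotWords_zero_succ (p : ℕ) :
    (ballotWords 0 (p + 1)).card = (ballotWords 0 p).card + (ballotWords 1 p).card := by
  simp only [ballotWords, Finset.card_filter, sum_stepWords_succ, isBallot_append_none_iff,
    isBallot_append_false_iff, not_isBallot_zero_append_true, Finset.sum_add_distrib, if_false,
    add_zero, zero_add]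

open Classical in
lemma card_ballotWords_succ_succ (a p : ℕ) : (ballotWords (a + 1) (p + 1)).card =
    (ballotWords a p).card + (ballotWords (a + 1) p).card + (ballotWords (a + 2) p).card := by
  simp only [ballotWords, Finset.card_filter, sum_stepWords_succ, isBallot_append_none_iff,
    isBallot_append_false_iff, isBallot_succ_append_true_iff, Finset.sum_add_distrib]
  ring

/-- The generating function by length of the Motzkin prefixes ending at height `a`. -/
noncomputable def ballotSeries (a : ℕ) : ℤ⟦X⟧ := PowerSeries.mk fun p => (ballotWords a p).card

lemma ballotSeries_zero : ballotSeries 0 = 1 + X * (ballotSeries 0 + ballotSeries 1) := by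
  ext (_ | p)
  · rw [map_add, coeff_zero_X_mul]
    simp [ballotSeries, card_ballotWords_zero_right]
  · rw [map_add, coeff_succ_X_mul]
    simp [ballotSeries, card_ballotWords_zero_succ, coeff_one]

lemma ballotSeries_succ (a : ℕ) : ballotSeries (a + 1) =
    X * (ballotSeries a + ballotSeries (a + 1) + ballotSeries (a + 2)) := by
  ext (_ | p)
  · rw [coeff_zero_X_mul]
    simp [ballotSeries, card_ballotWords_zero_right]
  · rw [coeff_succ_X_mul]
    simp [ballotSeries, card_ballotWords_succ_succ]

lemma ballotSeries_succ_eq_mul (a : ℕ) :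
    ballotSeries (a + 1) = X * ballotSeries 0 * ballotSeries a := by
  -- As functions of `a`, both sides satisfy the same recurrence.
  have := eq_zero_of_recurrence
    (E := fun a => X * ballotSeries 0 * ballotSeries a - ballotSeries (a + 1)) ?_ ?_ a
  · exact (sub_eq_zero.1 this).symm
  · linear_combination (X * ballotSeries 0) * ballotSeries_zero - ballotSeries_succ 0
  · intro a
    linear_combination (X * ballotSeries 0) * ballotSeries_succ a - ballotSeries_succ (a + 1)

lemma sum_stepWords_ballotSeries (l : ℕ) :
    ∑ w ∈ stepWords l, ballotSeries (w.count (some false)) * ballotSeries (w.count (some true)) =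
      ballotSeries 0 ^ 2 * (1 + 2 * X * ballotSeries 0) ^ l := by
  induction l with
  | zero => simp [stepWords, sq]
  | succ l ih =>
    rw [sum_stepWords_succ, pow_succ _ l, ← mul_assoc, ← ih, Finset.sum_mul]
    refine Finset.sum_congr rfl fun w _ => ?_
    simp only [List.count_append, List.count_singleton, beq_iff_eq, Option.some.injEq,
      reduceCtorEq, if_false, if_true, add_zero, ballotSeries_succ_eq_mul]
    ring

/-- The pairs of Motzkin prefixes of total length `k` ending at heights `a` and `b`. -/
noncomputable def ballotPairs (a b k : ℕ) : Finset (List (Option Bool) × List (Option Bool)) :=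
  (antidiagonal k).biUnion fun j => ballotWords a j.1 ×ˢ ballotWords b j.2

lemma mem_ballotPairs {a b k : ℕ} {t : List (Option Bool) × List (Option Bool)} :
    t ∈ ballotPairs a b k ↔ t.1.length + t.2.length = k ∧ IsBallot a t.1 ∧ IsBallot b t.2 := by
  simp only [ballotPairs, Finset.mem_biUnion, mem_antidiagonal, Finset.mem_product,
    mem_ballotWords, Prod.exists]
  constructor
  · rintro ⟨i, j, hij, ⟨rfl, hp⟩, rfl, hq⟩
    exact ⟨hij, hp, hq⟩
  · rintro ⟨hk, hp, hq⟩
    exact ⟨_, _, hk, ⟨rfl, hp⟩, rfl, hq⟩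

lemma card_ballotPairs (a b k : ℕ) :
    ((ballotPairs a b k).card : ℤ) = coeff k (ballotSeries a * ballotSeries b) := by
  rw [ballotPairs, Finset.card_biUnion]
  · simp [coeff_mul, ballotSeries]
  · refine fun i _ j _ hij => Finset.disjoint_left.2 fun t hi hj => hij ?_
    simp only [Finset.mem_product, mem_ballotWords] at hi hj
    exact Prod.ext (hi.1.1.symm.trans hj.1.1) (hi.2.1.symm.trans hj.2.1)

lemma ncard_ballotTriples_eq_sum (m : ℕ) : (ballotTriples m).ncard =
    ∑ k ∈ antidiagonal m, ∑ w ∈ stepWords k.1,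
      (ballotPairs (w.count (some false)) (w.count (some true)) k.2).card := by
  simp only [← Finset.card_sigma]
  rw [← Set.ncard_coe_finset]
  symm
  refine Set.ncard_congr (fun s _ => (s.2.2.1, s.2.1, s.2.2.2)) ?_ ?_ ?_
  · rintro ⟨⟨l, r⟩, w, p, q⟩ h
    simp only [Finset.mem_coe, Finset.mem_sigma, mem_antidiagonal, mem_stepWords,
      mem_ballotPairs] at h
    obtain ⟨hm, hw, hlen, hp, hq⟩ := h
    exact ⟨by dsimp only; omega, hp, hq⟩
  · rintro ⟨⟨l, r⟩, w, p, q⟩ ⟨⟨l', r'⟩, w', p', q'⟩ h h' heq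
    simp only [Finset.mem_coe, Finset.mem_sigma, mem_antidiagonal, mem_stepWords,
      mem_ballotPairs, Prod.mk.injEq] at h h' heq
    obtain ⟨rfl, rfl, rfl⟩ := heq
    obtain ⟨-, rfl, rfl, -⟩ := h
    obtain ⟨-, rfl, rfl, -⟩ := h'
    rfl
  · rintro ⟨p, w, q⟩ ⟨hm, hp, hq⟩
    refine ⟨⟨(w.length, p.length + q.length), w, p, q⟩, ?_, rfl⟩
    simp only [Finset.mem_coe, Finset.mem_sigma, mem_antidiagonal, mem_stepWords,
      mem_ballotPairs]
    exact ⟨by dsimp only at hm; omega, trivial, trivial, hp, hq⟩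

lemma derivative_X_mul_ballotSeries :
    d⁄dX ℤ (X * ballotSeries 0) * (1 - X * (1 + 2 * X * ballotSeries 0)) = ballotSeries 0 := by
  have h : ballotSeries 0 = 1 + X * ballotSeries 0 + (X * ballotSeries 0) ^ 2 := by
    linear_combination ballotSeries_zero + X * ballotSeries_succ_eq_mul 0
  -- `f = X * ballotSeries 0` satisfies `f = X * (1 + f + f ^ 2)`; differentiate this equation.
  have hd : d⁄dX ℤ (X * ballotSeries 0) =
      d⁄dX ℤ (X * (1 + X * ballotSeries 0 + (X * ballotSeries 0) ^ 2)) := by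
    rw [← h]
  rw [Derivation.leibniz _ X (1 + _ + _)] at hd
  simp only [map_add, Derivation.leibniz_pow, smul_eq_mul, derivative_X,
    Derivation.map_one_eq_zero] at hd
  rw [← h] at hd
  linear_combination hd

lemma sum_antidiagonal_coeff_eq (m : ℕ) :
    ∑ k ∈ antidiagonal m, coeff k.2 (ballotSeries 0 ^ 2 * (1 + 2 * X * ballotSeries 0) ^ k.1) =
      coeff m (d⁄dX ℤ (X * ballotSeries 0) * ballotSeries 0) := by
  set g := ballotSeries 0
  set z := X * (1 + 2 * X * g)
  have hterm : ∀ k ∈ antidiagonal m,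
      coeff k.2 (g ^ 2 * (1 + 2 * X * g) ^ k.1) = coeff m (g ^ 2 * z ^ k.1) := by
    intro k hk
    rw [← mem_antidiagonal.1 hk, mul_pow, mul_left_comm, add_comm k.1, coeff_X_pow_mul]
  have hgeom : g ^ 2 * ∑ i ∈ Finset.range (m + 1), z ^ i =
      d⁄dX ℤ (X * g) * g - X ^ (m + 1) * ((1 + 2 * X * g) ^ (m + 1) * d⁄dX ℤ (X * g) * g) := by
    have hsum := geom_sum_mul_neg z (m + 1)
    rw [mul_pow X _ (m + 1)] at hsum
    linear_combination d⁄dX ℤ (X * g) * g * hsum -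
      g * (∑ i ∈ Finset.range (m + 1), z ^ i) * derivative_X_mul_ballotSeries
  rw [Finset.sum_congr rfl hterm, Finset.Nat.sum_antidiagonal_eq_sum_range_succ
    (fun i _ => coeff m (g ^ 2 * z ^ i)), ← map_sum, ← Finset.mul_sum, hgeom, map_sub,
    coeff_X_pow_mul', if_neg (by omega), sub_zero]

lemma coeff_derivative_mul_ballotSeries (m : ℕ) :
    coeff m (d⁄dX ℤ (X * ballotSeries 0) * ballotSeries 0) =
      ((∑ i ∈ Finset.range (m + 1), (i + 1) * motzkin i * motzkin (m - i) : ℕ) : ℤ) := by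
  rw [coeff_mul, Finset.Nat.sum_antidiagonal_eq_sum_range_succ
    (fun i j => coeff i (d⁄dX ℤ (X * ballotSeries 0)) * coeff j (ballotSeries 0))]
  push_cast
  refine Finset.sum_congr rfl fun i _ => ?_
  rw [coeff_derivative, coeff_succ_X_mul, ballotSeries, coeff_mk, coeff_mk,
    card_ballotWords_zero_left, card_ballotWords_zero_left]
  ring

lemma ncard_ballotTriples (m : ℕ) : (ballotTriples m).ncard =
    ∑ i ∈ Finset.range (m + 1), (i + 1) * motzkin i * motzkin (m - i) := by
  rw [← Nat.cast_inj (R := ℤ), ← coeff_derivative_mul_ballotSeries, ← sum_antidiagonal_coeff_eq,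
    ncard_ballotTriples_eq_sum]
  simp only [Nat.cast_sum, card_ballotPairs, ← map_sum, sum_stepWords_ballotSeries]

end GeneratingFunctions

/-- **Lemma.** For `n ≥ 7`, the number of Dyck paths `D ∈ 𝒟̂ₙ` with `x₁(D) = y₂(D)` is
`Σ_{i=0}^{n-7} (i+1)·Mᵢ·M_{n-7-i}`; moreover for `n = 3` there is exactly one such path. -/
theorem dyckHat_x1_eq_y2_count :
    (∀ n : ℕ, 7 ≤ n →
      {w | IsDyckWord n w ∧ LStat n w = 4 ∧ ∃ k₁ k₂, twoStars n w k₁ k₂ ∧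
          xStat w k₁ = yStat w k₂}.ncard =
        ∑ i ∈ Finset.range (n - 7 + 1), (i + 1) * motzkin i * motzkin (n - 7 - i)) ∧
    {w | IsDyckWord 3 w ∧ LStat 3 w = 4 ∧ ∃ k₁ k₂, twoStars 3 w k₁ k₂ ∧
        xStat w k₁ = yStat w k₂}.ncard = 1 := by
  constructor
  · intro n hn
    obtain ⟨m, rfl⟩ := Nat.exists_eq_add_of_le' hn
    rw [ncard_dyckHat (by omega), ncard_hatColumnWords (by omega), ncard_specialTriples,
      ncard_ballotTriples, Nat.add_sub_cancel]
  · rw [ncard_dyckHat (by omega), hatColumnWords_three, Set.ncard_singleton]
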